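/- arXiv:2109.04613 — 2 statements merged into one kernel-verified Lean document; each statement's English description precedes it below -/
import Mathlib

section
/- Let R be a commutative noetherian ring with identity, a an ideal of R, and n ∈ {0, 1, 2}. Let M be an R-module belonging to the class FD_{≤ n} (there exists a finitely generated submodule N of M with dim_R M/N ≤ n) such that Supp_R M ⊆ V(a). Then M is a-cofinite if and only if Ext^i_R(R/a, M) is a finitely generated R-module for every i ≤ n. -/
universe u

open CategoryTheory

/-- `Ext^i_R(R/a, M)` as an `R`-module, for `M : ModuleCat R`. -/
noncomputable def extQuot {R : Type u} [CommRing R] (a : Ideal R) (i : ℕ)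
    (M : ModuleCat.{u} R) : ModuleCat.{u} R :=
  ((Ext R (ModuleCat.{u} R) i).obj (Opposite.op (ModuleCat.of R (R ⧸ a)))).obj M

/-- An `R`-module `M` is `a`-cofinite if `Supp M ⊆ V(a)` and `Ext^i_R(R/a, M)` is a
finitely generated `R`-module for every `i ≥ 0`. -/
def IsCofinite {R : Type u} [CommRing R] (a : Ideal R) (M : ModuleCat.{u} R) : Prop :=
  Module.support R M ⊆ PrimeSpectrum.zeroLocus (a : Set R) ∧
    ∀ i : ℕ, Module.Finite R (extQuot a i M)

set_option linter.unusedSectionVars false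


namespace Cof

structure SerreClass (R : Type u) [CommRing R] where
  P : ∀ (X : Type u) [AddCommGroup X] [Module R X], Prop
  zero : ∀ (X : Type u) [AddCommGroup X] [Module R X], Subsingleton X → P X
  mid : ∀ {X Y Z : Type u} [AddCommGroup X] [Module R X] [AddCommGroup Y] [Module R Y]
    [AddCommGroup Z] [Module R Z] (f : X →ₗ[R] Y) (g : Y →ₗ[R] Z),
    Function.Exact f g → P X → P Z → P Y

namespace SerreClass

variable {R : Type u} [CommRing R] (T : SerreClass R)
variable {X Y Z U : Type u} [AddCommGroup X] [Module R X] [AddCommGroup Y] [Module R Y]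
    [AddCommGroup Z] [Module R Z] [AddCommGroup U] [Module R U]

theorem of_inj (f : X →ₗ[R] Y) (hf : Function.Injective f) (h : T.P Y) : T.P X := by
  refine T.mid (0 : PUnit.{u+1} →ₗ[R] X) f ?_ (T.zero _ inferInstance) h
  intro x
  constructor
  · intro hx; exact ⟨0, by simpa using (hf (by simpa using hx.symm))⟩
  · rintro ⟨y, rfl⟩; simp

theorem of_surj (f : X →ₗ[R] Y) (hf : Function.Surjective f) (h : T.P X) : T.P Y := by
  refine T.mid f (0 : Y →ₗ[R] PUnit.{u+1}) ?_ h (T.zero _ inferInstance)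
  intro x
  exact ⟨fun _ => hf x, fun _ => rfl⟩

theorem of_equiv (e : X ≃ₗ[R] Y) (h : T.P X) : T.P Y := T.of_surj e.toLinearMap e.surjective h

theorem sub (N : Submodule R X) (h : T.P X) : T.P N := T.of_inj N.subtype N.injective_subtype h

theorem quot (N : Submodule R X) (h : T.P X) : T.P (X ⧸ N) := T.of_surj N.mkQ N.mkQ_surjective h

theorem of_le {N N' : Submodule R X} (hN : N ≤ N') (h : T.P N') : T.P N :=
  T.of_inj (Submodule.inclusion hN) (Submodule.inclusion_injective hN) h

theorem ext (N : Submodule R X) (h : T.P N) (h' : T.P (X ⧸ N)) : T.P X :=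
  T.mid N.subtype N.mkQ (LinearMap.exact_subtype_mkQ N) h h'

theorem map (f : X →ₗ[R] Y) (N : Submodule R X) (h : T.P N) : T.P (N.map f) :=
  T.of_surj (f.submoduleMap N) (f.submoduleMap_surjective N) h

theorem range (f : X →ₗ[R] Y) (h : T.P X) : T.P (LinearMap.range f) :=
  T.of_surj f.rangeRestrict f.surjective_rangeRestrict h

theorem ker_range (f : X →ₗ[R] Y) (h : T.P (LinearMap.ker f)) (h' : T.P (LinearMap.range f)) : T.P X :=
  T.mid (LinearMap.ker f).subtype f.rangeRestrict (by
    intro x; simp [Subtype.ext_iff]) h h'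

theorem of_factor (φ : U →ₗ[R] Y) (hφ : Function.Surjective φ) (β : U →ₗ[R] Z)
    (hk : ∀ u, β u = 0 → φ u = 0) (h : T.P Z) : T.P Y := by
  have h1 : T.P (U ⧸ LinearMap.ker β) :=
    T.of_inj ((LinearMap.ker β).liftQ β le_rfl) (by
      rw [← LinearMap.ker_eq_bot]; exact Submodule.ker_liftQ_eq_bot _ _ _ le_rfl) h
  refine T.of_surj ((LinearMap.ker β).liftQ φ (fun u hu => hk u hu)) ?_ h1
  intro y
  obtain ⟨u, rfl⟩ := hφ y
  exact ⟨Submodule.Quotient.mk u, rfl⟩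

theorem of_factor_sub (N : Submodule R Y) (φ : U →ₗ[R] Y) (hφ : ∀ y ∈ N, ∃ u, φ u = y)
    (β : U →ₗ[R] Z) (hk : ∀ u, β u = 0 → φ u = 0) (h : T.P Z) : T.P N := by
  have : T.P (LinearMap.range φ) := T.of_factor φ.rangeRestrict φ.surjective_rangeRestrict β
    (fun u hu => by simp [Subtype.ext_iff, hk u hu]) h
  exact T.of_le (fun y hy => by obtain ⟨u, rfl⟩ := hφ y hy; exact ⟨u, rfl⟩) this

theorem of_factor_quot (N : Submodule R Y) (φ : U →ₗ[R] Y) (hφ : Function.Surjective φ)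
    (β : U →ₗ[R] Z) (hk : ∀ u, β u = 0 → φ u ∈ N) (h : T.P Z) : T.P (Y ⧸ N) := by
  refine T.of_factor (N.mkQ ∘ₗ φ) (N.mkQ_surjective.comp hφ) β (fun u hu => ?_) h
  simpa using hk u hu

theorem prod (hX : T.P X) (hY : T.P Y) : T.P (X × Y) :=
  T.mid (LinearMap.inl R X Y) (LinearMap.snd R X Y) (by
    intro ⟨x, y⟩; simp [eq_comm]) hX hY

theorem pi (hX : T.P X) : ∀ n : ℕ, T.P (Fin n → X)
  | 0 => T.zero _ inferInstance
  | n+1 => T.of_equiv (Fin.consLinearEquiv R (fun _ : Fin (n+1) => X)) (T.prod hX (pi hX n))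

theorem sup {N N' : Submodule R X} (h : T.P N) (h' : T.P N') : T.P (N ⊔ N' : Submodule R X) := by
  refine T.of_surj ((N.subtype.coprod N'.subtype).codRestrict (N ⊔ N')
    (fun ⟨a, b⟩ => Submodule.add_mem_sup a.2 b.2)) ?_ (T.prod h h')
  rintro ⟨x, hx⟩
  obtain ⟨a, ha, b, hb, rfl⟩ := Submodule.mem_sup.1 hx
  exact ⟨(⟨a, ha⟩, ⟨b, hb⟩), by ext; simp⟩

end SerreClass

/-- finitely generated modules over a noetherian ring -/
def fg (R : Type u) [CommRing R] [IsNoetherianRing R] : SerreClass R where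
  P X _ _ := Module.Finite R X
  zero X _ _ h := inferInstance
  mid {X Y Z} _ _ _ _ _ _ f g h hX hZ := by
    have hX : Module.Finite R X := hX
    have hZ : Module.Finite R Z := hZ
    have : IsNoetherian R Y := isNoetherian_of_range_eq_ker f g h.linearMap_ker_eq.symm
    infer_instance

/-- torsion modules with respect to a submonoid -/
def tors {R : Type u} [CommRing R] (W : Submonoid R) : SerreClass R where
  P X _ _ := ∀ v : X, ∃ s ∈ W, s • v = 0
  zero X _ _ h := fun v => ⟨1, W.one_mem, Subsingleton.elim _ _⟩
  mid {X Y Z} _ _ _ _ _ _ f g h hX hZ := by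
    intro v
    obtain ⟨s, hs, h1⟩ := hZ (g v)
    rw [← map_smul] at h1
    obtain ⟨w, hw⟩ := (h _).1 h1
    obtain ⟨t, ht, h2⟩ := hX w
    exact ⟨t * s, W.mul_mem ht hs, by rw [mul_smul, ← hw, ← map_smul, h2, map_zero]⟩

/-- finitely generated modulo a Serre class -/
def fgMod {R : Type u} [CommRing R] [IsNoetherianRing R] (T : SerreClass R) : SerreClass R where
  P X _ _ := ∃ X' : Submodule R X, X'.FG ∧ T.P (X ⧸ X')
  zero X _ _ h := ⟨⊥, Submodule.fg_bot, T.zero _ inferInstance⟩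
  mid {X Y Z} _ _ _ _ _ _ f g h hX hZ := by
    obtain ⟨X', hX', hX⟩ := hX
    obtain ⟨Z', hZ', hZ⟩ := hZ
    have hfgZ : (Z' ⊓ LinearMap.range g).FG := by
      have : Module.Finite R Z' := Module.Finite.iff_fg.2 hZ'
      have := Submodule.FG.map Z'.subtype
        (IsNoetherian.noetherian (Submodule.comap Z'.subtype (LinearMap.range g)))
      rwa [Submodule.map_comap_subtype] at this
    obtain ⟨L, hL, hLm⟩ : ∃ L : Submodule R Y, L.FG ∧ L.map g = Z' ⊓ LinearMap.range g := by
      obtain ⟨s, hs⟩ := hfgZ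
      have h1 : ∀ z : s, ∃ y, g y = z := fun z => by
        have : (z : Z) ∈ Z' ⊓ LinearMap.range g := hs ▸ Submodule.subset_span z.2
        exact this.2
      choose y hy using h1
      refine ⟨Submodule.span R (Set.range y), ⟨Set.finite_range y |>.toFinset, by simp⟩, ?_⟩
      rw [Submodule.map_span, ← Set.range_comp, ← hs]
      congr 1
      ext z; simp [hy]
    refine ⟨X'.map f ⊔ L, (hX'.map f).sup hL, ?_⟩
    refine T.mid (X'.mapQ _ f (Submodule.map_le_iff_le_comap.1 le_sup_left))
      (Submodule.mapQ _ Z' g ?_) ?_ hX hZ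
    · refine sup_le ?_ ?_
      · rintro _ ⟨x, -, rfl⟩
        simp [(h (f x)).2 ⟨x, rfl⟩]
      · exact Submodule.map_le_iff_le_comap.1 (hLm.le.trans inf_le_left)
    · intro y
      induction y using Submodule.Quotient.induction_on with | _ y =>
      constructor
      · intro hy
        have hy : g y ∈ Z' := by simpa using hy
        have : g y ∈ L.map g := hLm ▸ ⟨hy, ⟨y, rfl⟩⟩
        obtain ⟨l, hl, hl'⟩ := this
        have h2 : g (y - l) = 0 := by rw [map_sub, hl', sub_self]
        obtain ⟨x, hx⟩ := (h _).1 h2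
        refine ⟨Submodule.Quotient.mk x, ?_⟩
        simp only [Submodule.mapQ_apply, hx]
        rw [Submodule.Quotient.eq]
        have : y - l - y = -l := by abel
        rw [this]
        exact Submodule.neg_mem _ (Submodule.mem_sup_right hl)
      · rintro ⟨x, hx⟩
        induction x using Submodule.Quotient.induction_on with | _ x =>
        rw [← hx]
        simp [(h (f x)).2 ⟨x, rfl⟩]

theorem fgMod_of_fg {R : Type u} [CommRing R] [IsNoetherianRing R] (T : SerreClass R)
    (X : Type u) [AddCommGroup X] [Module R X] (h : Module.Finite R X) : (fgMod T).P X :=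
  ⟨⊤, Module.Finite.fg_top, T.zero _ inferInstance⟩

theorem fgMod_of {R : Type u} [CommRing R] [IsNoetherianRing R] (T : SerreClass R)
    (X : Type u) [AddCommGroup X] [Module R X] (h : T.P X) : (fgMod T).P X :=
  ⟨⊥, Submodule.fg_bot, T.quot _ h⟩

/-- The union over `y ∈ S` of the classes of modules that are
  finitely generated modulo `y`-power torsion. -/
def gen {R : Type u} [CommRing R] [IsNoetherianRing R] (S : Submonoid R) : SerreClass R where
  P X _ _ := ∃ y ∈ S, (fgMod (tors (Submonoid.powers y))).P X
  zero X _ _ h := ⟨1, S.one_mem, SerreClass.zero _ _ h⟩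
  mid {X Y Z} _ _ _ _ _ _ f g h hX hZ := by
    obtain ⟨y, hy, hX⟩ := hX
    obtain ⟨z, hz, hZ⟩ := hZ
    refine ⟨y * z, S.mul_mem hy hz, SerreClass.mid _ f g h ?_ ?_⟩
    · obtain ⟨X', h1, h2⟩ := hX
      refine ⟨X', h1, fun v => ?_⟩
      obtain ⟨_, ⟨k, rfl⟩, h3⟩ := h2 v
      exact ⟨_, ⟨k, rfl⟩, by simp only at h3 ⊢; rw [mul_pow, mul_comm, mul_smul, h3, smul_zero]⟩
    · obtain ⟨X', h1, h2⟩ := hZ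
      refine ⟨X', h1, fun v => ?_⟩
      obtain ⟨_, ⟨k, rfl⟩, h3⟩ := h2 v
      exact ⟨_, ⟨k, rfl⟩, by simp only at h3 ⊢; rw [mul_pow, mul_smul, h3, smul_zero]⟩

end Cof

namespace Cof

section mact
variable {R : Type u} [CommRing R] {ι κ τ : Type} [Fintype ι] [Fintype κ] [Fintype τ]
variable {M M' : Type u} [AddCommGroup M] [Module R M] [AddCommGroup M'] [Module R M']

def mact (M : Type u) [AddCommGroup M] [Module R M] (A : Matrix ι κ R) : (κ → M) →ₗ[R] (ι → M) where
  toFun m i := ∑ k, A i k • m k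
  map_add' m m' := by ext i; simp [Finset.sum_add_distrib]
  map_smul' r m := by
    ext i
    simp only [Pi.smul_apply, Finset.smul_sum, RingHom.id_apply]
    exact Finset.sum_congr rfl (fun k _ => smul_comm _ _ _)

theorem mact_apply (A : Matrix ι κ R) (m : κ → M) (i : ι) : mact M A m i = ∑ k, A i k • m k := rfl

theorem mact_mul (A : Matrix ι κ R) (B : Matrix κ τ R) (m : τ → M) :
    mact M (A * B) m = mact M A (mact M B m) := by
  ext i
  simp only [mact_apply, Matrix.mul_apply, Finset.sum_smul, Finset.smul_sum, mul_smul]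
  exact Finset.sum_comm

theorem mact_zero (m : κ → M) : mact M (0 : Matrix ι κ R) m = 0 := by
  ext i; simp [mact_apply]

theorem mact_add (A B : Matrix ι κ R) (m : κ → M) :
    mact M (A + B) m = mact M A m + mact M B m := by
  ext i; simp [mact_apply, add_smul, Finset.sum_add_distrib]

theorem mact_smul_one [DecidableEq κ] (x : R) (m : κ → M) :
    mact M (x • (1 : Matrix κ κ R)) m = x • m := by
  ext i; simp [mact_apply, Matrix.one_apply]

theorem mact_nat (f : M →ₗ[R] M') (A : Matrix ι κ R) (m : κ → M) :
    mact M' A (f ∘ m) = f ∘ (mact M A m) := by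
  ext i; simp [mact_apply]

end mact

structure Data (R : Type u) [CommRing R] (a : Ideal R) where
  n : ℕ → ℕ
  n0 : 0 < n 0
  A : ∀ j, Matrix (Fin (n (j+1))) (Fin (n j)) R
  comp : ∀ j, A (j+1) * A j = 0
  mem : ∀ k l, A 0 k l ∈ a
  htpy : ∀ x ∈ a, ∃ s : ∀ j, Matrix (Fin (n j)) (Fin (n (j+1))) R,
    s 0 * A 0 = x • 1 ∧ ∀ j, s (j+1) * A (j+1) + A j * s j = x • 1

namespace Data
variable {R : Type u} [CommRing R] {a : Ideal R} (K : Data R a)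
variable {M M' M'' : Type u} [AddCommGroup M] [Module R M] [AddCommGroup M'] [Module R M']
  [AddCommGroup M''] [Module R M'']

abbrev C (i : ℕ) (M : Type u) := Fin (K.n i) → M

def d (i : ℕ) (M : Type u) [AddCommGroup M] [Module R M] : K.C i M →ₗ[R] K.C (i+1) M := mact M (K.A i)

def Z (i : ℕ) (M : Type u) [AddCommGroup M] [Module R M] : Submodule R (K.C i M) := LinearMap.ker (K.d i M)

def B : ∀ (i : ℕ) (M : Type u) [AddCommGroup M] [Module R M], Submodule R (K.C i M)
  | 0, _, _, _ => ⊥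
  | i+1, M, _, _ => LinearMap.range (K.d i M)

abbrev E (i : ℕ) (M : Type u) [AddCommGroup M] [Module R M] :=
  K.Z i M ⧸ (K.B i M).comap (K.Z i M).subtype

def cmap (i : ℕ) (f : M →ₗ[R] M') : K.C i M →ₗ[R] K.C i M' := f.compLeft _

theorem cmap_apply (i : ℕ) (f : M →ₗ[R] M') (m : K.C i M) (k) : K.cmap i f m k = f (m k) := rfl

theorem d_cmap (i : ℕ) (f : M →ₗ[R] M') (m : K.C i M) :
    K.d i M' (K.cmap i f m) = K.cmap (i+1) f (K.d i M m) := mact_nat f _ m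

theorem d_d (i : ℕ) (m : K.C i M) : K.d (i+1) M (K.d i M m) = 0 := by
  unfold d
  rw [← mact_mul, K.comp, mact_zero]

theorem mem_Z {i : ℕ} {m : K.C i M} : m ∈ K.Z i M ↔ K.d i M m = 0 := Iff.rfl

theorem cmap_Z {i : ℕ} (f : M →ₗ[R] M') {m : K.C i M} (h : m ∈ K.Z i M) : K.cmap i f m ∈ K.Z i M' := by
  rw [mem_Z] at *; rw [d_cmap, h, map_zero]

theorem cmap_B {i : ℕ} (f : M →ₗ[R] M') {m : K.C i M} (h : m ∈ K.B i M) : K.cmap i f m ∈ K.B i M' := by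
  cases i with
  | zero => 
    have : m = 0 := h
    rw [this, map_zero]; exact Submodule.zero_mem _
  | succ i =>
    obtain ⟨w, rfl⟩ := h
    exact ⟨K.cmap i f w, K.d_cmap i f w⟩

theorem B_le_Z {i : ℕ} {m : K.C i M} (h : m ∈ K.B i M) : m ∈ K.Z i M := by
  cases i with
  | zero => 
    have : m = 0 := h
    rw [this]; exact Submodule.zero_mem _
  | succ i =>
    obtain ⟨w, rfl⟩ := h
    exact K.d_d i w

theorem cmap_inj (i : ℕ) {f : M →ₗ[R] M'} (hf : Function.Injective f) :
    Function.Injective (K.cmap i f) := hf.comp_left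

theorem cmap_surj (i : ℕ) {f : M →ₗ[R] M'} (hf : Function.Surjective f) :
    Function.Surjective (K.cmap i f) := hf.comp_left

theorem cmap_exact (i : ℕ) {f : M' →ₗ[R] M} {g : M →ₗ[R] M''} (h : Function.Exact f g) :
    Function.Exact (K.cmap i f) (K.cmap i g) := by
  intro m
  constructor
  · intro hm
    have : ∀ k, ∃ w, f w = m k := fun k => (h _).1 (congrFun hm k)
    choose w hw using this
    exact ⟨w, funext hw⟩
  · rintro ⟨w, rfl⟩
    ext k
    exact (h _).2 ⟨_, rfl⟩

theorem B_lift {i : ℕ} {g : M →ₗ[R] M''} (hg : Function.Surjective g) {b : K.C i M''}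
    (hb : b ∈ K.B i M'') : ∃ c ∈ K.B i M, K.cmap i g c = b := by
  cases i with
  | zero =>
    have : b = 0 := hb
    exact ⟨0, Submodule.zero_mem _, by rw [this, map_zero]⟩
  | succ i =>
    obtain ⟨w, rfl⟩ := hb
    obtain ⟨v, rfl⟩ := K.cmap_surj i hg w
    exact ⟨_, ⟨v, rfl⟩, (K.d_cmap i g v).symm⟩

def cls (i : ℕ) (M : Type u) [AddCommGroup M] [Module R M] : K.Z i M →ₗ[R] K.E i M := Submodule.mkQ _

theorem cls_surj (i : ℕ) : Function.Surjective (K.cls i M) := Submodule.mkQ_surjective _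

theorem cls_eq_zero {i : ℕ} {z : K.Z i M} : K.cls i M z = 0 ↔ (z : K.C i M) ∈ K.B i M := by
  simp [cls]

theorem cls_eq {i : ℕ} {z w : K.Z i M} : K.cls i M z = K.cls i M w ↔ (z : K.C i M) - w ∈ K.B i M := by
  rw [← sub_eq_zero, ← map_sub, cls_eq_zero]; rfl

def zmap (i : ℕ) (f : M →ₗ[R] M') : K.Z i M →ₗ[R] K.Z i M' :=
  (K.cmap i f).restrict (fun _ h => K.cmap_Z f h)

def emap (i : ℕ) (f : M →ₗ[R] M') : K.E i M →ₗ[R] K.E i M' :=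
  Submodule.mapQ _ _ (K.zmap i f) (fun _ h => K.cmap_B f h)

theorem emap_cls {i : ℕ} (f : M →ₗ[R] M') (z : K.Z i M) :
    K.emap i f (K.cls i M z) = K.cls i M' (K.zmap i f z) := rfl

theorem zmap_coe {i : ℕ} (f : M →ₗ[R] M') (z : K.Z i M) :
    (K.zmap i f z : K.C i M') = K.cmap i f z := rfl

theorem emap_comp (i : ℕ) (f : M →ₗ[R] M') (g : M' →ₗ[R] M'') (e : K.E i M) :
    K.emap i g (K.emap i f e) = K.emap i (g ∘ₗ f) e := by
  obtain ⟨z, rfl⟩ := K.cls_surj i e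
  rfl

theorem emap_smul (i : ℕ) (x : R) (e : K.E i M) :
    K.emap i (x • (LinearMap.id : M →ₗ[R] M)) e = x • e := by
  obtain ⟨z, rfl⟩ := K.cls_surj i e
  rfl

theorem emap_id (i : ℕ) (e : K.E i M) : K.emap i (LinearMap.id : M →ₗ[R] M) e = e := by
  obtain ⟨z, rfl⟩ := K.cls_surj i e
  rfl

theorem smul_E {x : R} (hx : x ∈ a) (i : ℕ) (e : K.E i M) : x • e = 0 := by
  obtain ⟨z, rfl⟩ := K.cls_surj i e
  rw [← map_smul, cls_eq_zero]
  obtain ⟨s, h0, h1⟩ := K.htpy x hx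
  have hz : mact M (K.A i) z = 0 := z.2
  change x • (z : K.C i M) ∈ _
  cases i with
  | zero =>
    have : x • (z : K.C 0 M) = 0 := by
      rw [← mact_smul_one, ← h0, mact_mul, hz, map_zero]
    rw [this]; exact Submodule.zero_mem _
  | succ i =>
    have : x • (z : K.C (i+1) M) = K.d i M (mact M (s i) z) := by
      rw [← mact_smul_one, ← h1 i, mact_add, mact_mul, hz, map_zero, zero_add, mact_mul]; rfl
    rw [this]; exact ⟨_, rfl⟩

def eEquiv (i : ℕ) (e : M ≃ₗ[R] M') : K.E i M ≃ₗ[R] K.E i M' :=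
  LinearEquiv.ofLinearMap (K.emap i e.toLinearMap) (K.emap i e.symm.toLinearMap)
    (by ext1; ext x : 1; refine (K.emap_comp i _ _ (K.cls i M' x)).trans ?_; simp; exact K.emap_id i _)
    (by ext1; ext x : 1; refine (K.emap_comp i _ _ (K.cls i M x)).trans ?_; simp; exact K.emap_id i _)

variable (T : SerreClass R)

theorem P_E (i : ℕ) (h : T.P M) : T.P (K.E i M) :=
  T.quot _ (T.sub _ (T.pi h _))

theorem P_equiv (i : ℕ) (e : M ≃ₗ[R] M') (h : T.P (K.E i M)) : T.P (K.E i M') :=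
  T.of_equiv (K.eEquiv i e) h

section LES
variable {f : M' →ₗ[R] M} {g : M →ₗ[R] M''}

theorem Lex (hf : Function.Injective f) (hfg : Function.Exact f g) (hg : Function.Surjective g) (i : ℕ) : Function.Exact (K.emap i f) (K.emap i g) := by
  intro e
  obtain ⟨z, rfl⟩ := K.cls_surj i e
  constructor
  · intro hz
    rw [emap_cls, cls_eq_zero, zmap_coe] at hz
    obtain ⟨c, hc, hc'⟩ := K.B_lift hg hz
    have h1 : K.cmap i g (z - c) = 0 := by rw [map_sub, hc', sub_self]
    obtain ⟨w, hw⟩ := (K.cmap_exact i hfg _).1 h1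
    have hwZ : w ∈ K.Z i M' := by
      rw [mem_Z]
      apply K.cmap_inj (i+1) hf
      rw [← d_cmap, hw, map_sub, map_zero, (K.mem_Z.1 z.2), K.mem_Z.1 (K.B_le_Z hc), sub_zero]
    refine ⟨K.cls i M' ⟨w, hwZ⟩, ?_⟩
    rw [emap_cls, cls_eq, zmap_coe, hw]
    simpa using hc
  · rintro ⟨e', he'⟩
    rw [← he', emap_comp]
    obtain ⟨w, rfl⟩ := K.cls_surj i e'
    rw [emap_cls, cls_eq_zero, zmap_coe]
    have : K.cmap i (g ∘ₗ f) w = 0 := by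
      ext k; exact (hfg _).2 ⟨_, rfl⟩
    rw [this]; exact Submodule.zero_mem _

theorem L1 (hf : Function.Injective f) (hfg : Function.Exact f g) (hg : Function.Surjective g) {i : ℕ} (h' : T.P (K.E i M')) (h'' : T.P (K.E i M'')) : T.P (K.E i M) :=
  T.mid (K.emap i f) (K.emap i g) (K.Lex hf hfg hg i) h' h''

def U (i : ℕ) (f : M' →ₗ[R] M) : Submodule R (K.C i M × K.C (i+1) M') :=
  LinearMap.ker ((K.d i M).coprod (-(K.cmap (i+1) f)))

theorem mem_U {i : ℕ} {f : M' →ₗ[R] M} {p : K.C i M × K.C (i+1) M'} :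
    p ∈ K.U i f ↔ K.d i M p.1 = K.cmap (i+1) f p.2 := by
  simp [U, ← sub_eq_add_neg, sub_eq_zero]

theorem U_g (hfg : Function.Exact f g) {i : ℕ} (p : K.U i f) : K.cmap i g p.1.1 ∈ K.Z i M'' := by
  rw [mem_Z, d_cmap, K.mem_U.1 p.2]
  exact (K.cmap_exact _ hfg _).2 ⟨_, rfl⟩

theorem U_w (hf : Function.Injective f) {i : ℕ} (p : K.U i f) : p.1.2 ∈ K.Z (i+1) M' := by
  rw [mem_Z]
  apply K.cmap_inj _ hf
  rw [← d_cmap, ← K.mem_U.1 p.2, d_d, map_zero]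

def Ug (i : ℕ) (hfg : Function.Exact f g) : K.U i f →ₗ[R] K.E i M'' :=
  K.cls i M'' ∘ₗ (((K.cmap i g) ∘ₗ LinearMap.fst R _ _ ∘ₗ (K.U i f).subtype).codRestrict _ (K.U_g hfg))

def Uw (i : ℕ) (hf : Function.Injective f) : K.U i f →ₗ[R] K.E (i+1) M' :=
  K.cls (i+1) M' ∘ₗ ((LinearMap.snd R _ _ ∘ₗ (K.U i f).subtype).codRestrict _ (K.U_w hf))

/-- cokernel of a map in the long exact sequence -/
theorem LC (hf : Function.Injective f) (hfg : Function.Exact f g) (hg : Function.Surjective g) {i : ℕ} (h : T.P (K.E (i+1) M')) : T.P (K.E i M'' ⧸ LinearMap.range (K.emap i g)) := by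
  refine T.of_factor_quot _ (K.Ug i hfg) ?_ (K.Uw i hf) ?_ h
  · intro e
    obtain ⟨z, rfl⟩ := K.cls_surj i e
    obtain ⟨m, hm⟩ := K.cmap_surj i hg z.1
    have : K.cmap (i+1) g (K.d i M m) = 0 := by
      rw [← d_cmap, hm]; exact z.2
    obtain ⟨w, hw⟩ := (K.cmap_exact _ hfg _).1 this
    refine ⟨⟨(m, w), K.mem_U.2 hw.symm⟩, ?_⟩
    change K.cls i M'' ⟨_, _⟩ = _
    congr 1
    ext1; exact hm
  · intro p hp
    have h1 : p.1.2 ∈ K.B (i+1) M' := K.cls_eq_zero.1 hp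
    obtain ⟨v, hv⟩ := h1
    refine ⟨K.cls i M ⟨p.1.1 - K.cmap i f v, ?_⟩, ?_⟩
    · rw [mem_Z, map_sub, d_cmap, hv, K.mem_U.1 p.2, sub_self]
    · change _ = K.cls i M'' ⟨_, _⟩
      rw [emap_cls]
      congr 1
      ext1
      change K.cmap i g (p.1.1 - K.cmap i f v) = K.cmap i g p.1.1
      rw [map_sub, (K.cmap_exact _ hfg _).2 ⟨v, rfl⟩, sub_zero]

/-- kernel of a map in the long exact sequence -/
theorem LK (hf : Function.Injective f) (hfg : Function.Exact f g) (hg : Function.Surjective g) {i : ℕ} (h : T.P (K.E i M'')) : T.P (LinearMap.ker (K.emap (i+1) f)) := by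
  refine T.of_factor_sub _ (K.Uw i hf) ?_ (K.Ug i hfg) ?_ h
  · intro e he
    obtain ⟨z, rfl⟩ := K.cls_surj _ e
    rw [LinearMap.mem_ker, emap_cls, cls_eq_zero] at he
    obtain ⟨m, hm⟩ := he
    exact ⟨⟨(m, z.1), K.mem_U.2 hm⟩, rfl⟩
  · intro p hp
    have h1 : K.cmap i g p.1.1 ∈ K.B i M'' := K.cls_eq_zero.1 hp
    obtain ⟨c, hc, hc'⟩ := K.B_lift hg h1
    have h2 : K.cmap i g (p.1.1 - c) = 0 := by rw [map_sub, hc', sub_self]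
    obtain ⟨v, hv⟩ := (K.cmap_exact _ hfg _).1 h2
    refine K.cls_eq_zero.2 ⟨v, ?_⟩
    apply K.cmap_inj _ hf
    rw [← d_cmap, hv, map_sub, K.mem_Z.1 (K.B_le_Z hc), sub_zero]
    exact K.mem_U.1 p.2

theorem LK0 (hf : Function.Injective f) (hfg : Function.Exact f g) (hg : Function.Surjective g) : T.P (LinearMap.ker (K.emap 0 f)) := by
  refine T.zero _ ?_
  rw [Submodule.subsingleton_iff_eq_bot, eq_bot_iff]
  intro e he
  obtain ⟨z, rfl⟩ := K.cls_surj _ e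
  rw [LinearMap.mem_ker, emap_cls, cls_eq_zero] at he
  have h : K.cmap 0 f z.1 = 0 := he
  have : z.1 = 0 := K.cmap_inj 0 hf (by rw [h, map_zero])
  rw [Submodule.mem_bot, cls_eq_zero, this]
  exact Submodule.zero_mem _

theorem L2 (hf : Function.Injective f) (hfg : Function.Exact f g) (hg : Function.Surjective g) {i : ℕ} (h : T.P (K.E i M)) (h' : T.P (K.E (i+1) M')) : T.P (K.E i M'') :=
  T.ext (LinearMap.range (K.emap i g)) (T.range _ h) (K.LC T hf hfg hg h')

theorem L3 (hf : Function.Injective f) (hfg : Function.Exact f g) (hg : Function.Surjective g) {i : ℕ} (h : T.P (K.E i M'')) (h' : T.P (K.E (i+1) M)) : T.P (K.E (i+1) M') :=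
  T.ker_range (K.emap (i+1) f) (K.LK T hf hfg hg h) (T.sub _ h')

theorem L30 (hf : Function.Injective f) (hfg : Function.Exact f g) (hg : Function.Surjective g) (h' : T.P (K.E 0 M)) : T.P (K.E 0 M') :=
  T.ker_range (K.emap 0 f) (K.LK0 T hf hfg hg) (T.sub _ h')

end LES

theorem mem_Z0 {m : K.C 0 M} : m ∈ K.Z 0 M ↔ ∀ k, m k ∈ Submodule.torsionBySet R M a := by
  constructor
  · intro hm k
    rw [Submodule.mem_torsionBySet_iff]
    rintro ⟨x, hx⟩
    have h := K.smul_E hx 0 (K.cls 0 M ⟨m, hm⟩)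
    rw [← map_smul, cls_eq_zero] at h
    exact congrFun (show x • m = 0 from h) k
  · intro h
    rw [mem_Z]
    ext i
    change ∑ k, K.A 0 i k • m k = 0
    refine Finset.sum_eq_zero fun k _ => ?_
    exact (Submodule.mem_torsionBySet_iff _ _).1 (h k) ⟨_, K.mem i k⟩

theorem P_E0 : T.P (K.E 0 M) ↔ T.P (Submodule.torsionBySet R M a) := by
  constructor
  · intro h
    have hZ : T.P (K.Z 0 M) := T.of_factor LinearMap.id Function.surjective_id (K.cls 0 M)
      (fun z hz => by
        rw [cls_eq_zero] at hz
        exact Subtype.ext (show z.1 = 0 from hz)) h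
    refine T.of_surj (((LinearMap.proj (⟨0, K.n0⟩ : Fin (K.n 0))).comp (K.Z 0 M).subtype).codRestrict _
      (fun z => K.mem_Z0.1 z.2 _)) ?_ hZ
    intro v
    refine ⟨⟨fun _ => v, K.mem_Z0.2 fun _ => v.2⟩, ?_⟩
    ext; rfl
  · intro h
    refine T.quot _ (T.of_inj (Y := Fin (K.n 0) → Submodule.torsionBySet R M a)
      (LinearMap.pi fun k => ((LinearMap.proj k).comp (K.Z 0 M).subtype).codRestrict _
        (fun z => K.mem_Z0.1 z.2 k)) ?_ (T.pi h _))
    intro z w hzw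
    ext k
    exact congrArg Subtype.val (congrFun hzw k)

end Data
end Cof

namespace Cof
open LinearMap (ker range lsmul)

variable {R : Type u} [CommRing R]
variable {M : Type u} [AddCommGroup M] [Module R M]

/-- descending chains of submodules become stationary up to `S`-torsion -/
def chain (S : Submonoid R) : SerreClass R where
  P X _ _ := ∀ f : ℕ → Submodule R X, Antitone f → ∃ k, ∀ j, ∀ v ∈ f k, ∃ s ∈ S, s • v ∈ f j
  zero X _ _ h := fun f _ => ⟨0, fun j v _ => ⟨1, S.one_mem, by
    rw [Subsingleton.elim (1 • v) 0]; exact Submodule.zero_mem _⟩⟩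
  mid {X Y Z} _ _ _ _ _ _ f g h hX hZ := by
    intro N hN
    obtain ⟨k1, h1⟩ := hX (fun j => (N j).comap f) (fun i j hij => Submodule.comap_mono (hN hij))
    obtain ⟨k2, h2⟩ := hZ (fun j => (N j).map g) (fun i j hij => Submodule.map_mono (hN hij))
    refine ⟨max k1 k2, fun j v hv => ?_⟩
    obtain ⟨s, hs, w, hw, hws⟩ := h2 (max j (max k1 k2)) (g v)
      (Submodule.mem_map_of_mem (hN (le_max_right _ _) hv))
    have h3 : g (s • v - w) = 0 := by rw [map_sub, map_smul, hws, sub_self]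
    obtain ⟨x, hx⟩ := (h _).1 h3
    have hxk : x ∈ (N k1).comap f := by
      rw [Submodule.mem_comap, hx]
      exact Submodule.sub_mem _ (Submodule.smul_mem _ _ (hN (le_max_left _ _) hv))
        (hN ((le_max_left _ _).trans (le_max_right _ _)) hw)
    obtain ⟨t, ht, htx⟩ := h1 j x hxk
    refine ⟨t * s, S.mul_mem ht hs, ?_⟩
    have : (t * s) • v = f (t • x) + t • w := by
      rw [map_smul, hx, smul_sub, mul_smul]; abel
    rw [this]
    exact Submodule.add_mem _ htx (Submodule.smul_mem _ _ (hN (le_max_left _ _) hw))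

theorem chain_of_tors {S : Submonoid R} (h : (tors S).P M) : (chain S).P M := by
  intro f _
  refine ⟨0, fun j v _ => ?_⟩
  obtain ⟨s, hs, h⟩ := h v
  exact ⟨s, hs, by rw [h]; exact Submodule.zero_mem _⟩

theorem chain_principal {S : Submonoid R} {x : R} (hx : ∀ v : M, ∃ N : ℕ, x ^ N • v = 0)
    (h : (chain S).P (ker (lsmul R M x))) : (chain S).P M := by
  intro N hN
  set G : ℕ → ℕ → Submodule R (ker (lsmul R M x)) :=
    fun i j => ((N j).map (lsmul R M (x ^ i))).comap (ker (lsmul R M x)).subtype with hG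
  have memG : ∀ i j v, v ∈ G i j ↔ ∃ w ∈ N j, x ^ i • w = v := fun i j v => Iff.rfl
  have Gi : ∀ i i' j, i ≤ i' → G i' j ≤ G i j := by
    intro i i' j hi v hv
    obtain ⟨w, hw, hw'⟩ := (memG _ _ _).1 hv
    refine (memG _ _ _).2 ⟨x ^ (i' - i) • w, Submodule.smul_mem _ _ hw, ?_⟩
    rw [← mul_smul, ← pow_add, ← hw']; congr 2; omega
  have Gj : ∀ i j j', j ≤ j' → G i j' ≤ G i j := by
    intro i j j' hj v hv
    obtain ⟨w, hw, hw'⟩ := (memG _ _ _).1 hv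
    exact (memG _ _ _).2 ⟨w, hN hj hw, hw'⟩
  obtain ⟨k, hk⟩ := h (fun j => G j j) (fun j j' hj => (Gi _ _ _ hj).trans (Gj _ _ _ hj))
  have hk' : ∀ i, ∃ l, ∀ j, ∀ v ∈ G i l, ∃ s ∈ S, s • v ∈ G i j := fun i =>
    h (fun j => G i j) (fun j j' hj => Gj _ _ _ hj)
  choose l hl using hk'
  obtain ⟨J, hJ⟩ : ∃ J, ∀ i j, ∀ v ∈ G i J, ∃ s ∈ S, s • v ∈ G i j := by
    refine ⟨max k ((Finset.range k).sup l), fun i j v hv => ?_⟩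
    by_cases hi : k ≤ i
    · obtain ⟨s, hs, h1⟩ := hk (max i j) v (Gi _ _ _ hi (Gj _ _ _ (le_max_left _ _) hv))
      exact ⟨s, hs, Gi _ _ _ (le_max_left _ _) (Gj _ _ _ (le_max_right _ _) h1)⟩
    · refine hl i j v (Gj _ _ _ ?_ hv)
      exact (Finset.le_sup (f := l) (Finset.mem_range.2 (not_le.1 hi))).trans (le_max_right _ _)
  refine ⟨J, fun j v hv => ?_⟩
  obtain ⟨e, he⟩ := hx v
  induction e generalizing v with
  | zero => exact ⟨1, S.one_mem, by simp at he; simp [he]⟩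
  | succ e ih =>
    have h1 : x ^ e • v ∈ ker (lsmul R M x) := by
      rw [LinearMap.mem_ker, LinearMap.lsmul_apply, ← mul_smul, ← pow_succ', he]
    obtain ⟨s, hs, h2⟩ := hJ e (max j J) ⟨_, h1⟩ ((memG _ _ _).2 ⟨v, hv, rfl⟩)
    obtain ⟨w, hw, hw'⟩ := (memG _ _ _).1 h2
    have hw' : x ^ e • w = s • x ^ e • v := hw'
    obtain ⟨t, ht, h3⟩ := ih (s • v - w) (Submodule.sub_mem _ (Submodule.smul_mem _ _ hv)
      (hN (le_max_right _ _) hw)) (by rw [smul_sub, hw', smul_comm, sub_self])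
    refine ⟨t * s, S.mul_mem ht hs, ?_⟩
    have : (t * s) • v = t • (s • v - w) + t • w := by rw [smul_sub, mul_smul]; abel
    rw [this]
    exact Submodule.add_mem _ h3 (Submodule.smul_mem _ _ (hN (le_max_left _ _) hw))

/-- induction over a finite set of ring elements -/
theorem torsion_induct (T : SerreClass R) (Q : R → ∀ (X : Type u) [AddCommGroup X] [Module R X], Prop)
    (hQ : ∀ x (X : Type u) [AddCommGroup X] [Module R X] (N : Submodule R X), Q x X → Q x N)
    (hT : ∀ x (X : Type u) [AddCommGroup X] [Module R X], Q x X → T.P (ker (lsmul R X x)) → T.P X)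
    (s : Finset R) : ∀ (X : Type u) [AddCommGroup X] [Module R X], (∀ x ∈ s, Q x X) →
      T.P (Submodule.torsionBySet R X s) → T.P X := by
  classical
  induction s using Finset.induction_on with
  | empty =>
    intro X _ _ _ h
    refine T.of_surj (Submodule.torsionBySet R X _).subtype ?_ h
    intro v; exact ⟨⟨v, by simp [Submodule.mem_torsionBySet_iff]⟩, rfl⟩
  | insert x s hx ih =>
    intro X _ _ hX h
    refine hT x X (hX x (by simp)) ?_
    refine ih _ (fun y hy => hQ _ _ _ (hX y (by simp [hy]))) ?_
    refine T.of_inj (((ker (lsmul R X x)).subtype.comp (Submodule.subtype _)).codRestrict _ ?_) ?_ h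
    · rintro ⟨⟨v, hv⟩, hv'⟩
      rw [Submodule.mem_torsionBySet_iff] at hv' ⊢
      rintro ⟨y, hy⟩
      simp only [Finset.coe_insert, Set.mem_insert_iff, Finset.mem_coe] at hy
      rcases hy with rfl | hy
      · exact hv
      · exact congrArg Subtype.val (hv' ⟨y, hy⟩)
    · intro v w hvw
      have := congrArg Subtype.val hvw
      exact Subtype.ext (Subtype.ext this)

/-- `a`-torsion modules -/
def IsTors (a : Ideal R) (X : Type u) [AddCommGroup X] [Module R X] : Prop :=
  ∀ x ∈ a, ∀ v : X, ∃ N : ℕ, x ^ N • v = 0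

theorem IsTors.of_inj {a : Ideal R} {X Y : Type u} [AddCommGroup X] [Module R X] [AddCommGroup Y] [Module R Y]
    (f : X →ₗ[R] Y) (hf : Function.Injective f) (h : IsTors a Y) : IsTors a X := by
  intro x hx v
  obtain ⟨N, hN⟩ := h x hx (f v)
  exact ⟨N, hf (by rw [map_smul, hN, map_zero])⟩

theorem IsTors.of_surj {a : Ideal R} {X Y : Type u} [AddCommGroup X] [Module R X] [AddCommGroup Y] [Module R Y]
    (f : X →ₗ[R] Y) (hf : Function.Surjective f) (h : IsTors a X) : IsTors a Y := by
  intro x hx v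
  obtain ⟨v, rfl⟩ := hf v
  obtain ⟨N, hN⟩ := h x hx v
  exact ⟨N, by rw [← map_smul, hN, map_zero]⟩

theorem IsTors.sub {a : Ideal R} (h : IsTors a M) (N : Submodule R M) : IsTors a N :=
  h.of_inj N.subtype N.injective_subtype

theorem IsTors.quot {a : Ideal R} (h : IsTors a M) (N : Submodule R M) : IsTors a (M ⧸ N) :=
  h.of_surj N.mkQ N.mkQ_surjective

theorem chain_of_socle {a : Ideal R} (ha : a.FG) {S : Submonoid R} (hM : IsTors a M)
    (h : (chain S).P (Submodule.torsionBySet R M a)) : (chain S).P M := by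
  obtain ⟨s, rfl⟩ := ha
  refine torsion_induct (chain S) (fun x X _ _ => ∀ v : X, ∃ N : ℕ, x ^ N • v = 0) ?_ ?_ s M ?_ ?_
  · intro x X _ _ N h v
    obtain ⟨k, hk⟩ := h v
    exact ⟨k, Subtype.ext hk⟩
  · intro x X _ _ h1 h2
    exact chain_principal h1 h2
  · exact fun x hx v => hM x (Submodule.subset_span hx) v
  · rwa [← Submodule.torsionBySet_eq_torsionBySet_span] at h

/-- `cd W n p`: chains of primes above `p` disjoint from `W` have length at most `n` -/
def cd (W : Submonoid R) : ℕ → Ideal R → Prop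
  | 0, p => ∀ q : Ideal R, q.IsPrime → p < q → ¬ Disjoint (q : Set R) (W : Set R)
  | n+1, p => ∀ q : Ideal R, q.IsPrime → p < q → Disjoint (q : Set R) (W : Set R) → cd W n q

theorem chain_quot_prime {S : Submonoid R} (p : Ideal R) (h : Disjoint (p : Set R) (S : Set R) → cd S 0 p) :
    (chain S).P (R ⧸ p) := by
  by_cases hp : Disjoint (p : Set R) (S : Set R)
  swap
  · rw [Set.not_disjoint_iff] at hp
    obtain ⟨s, hs, hs'⟩ := hp
    refine chain_of_tors fun v => ⟨s, hs', ?_⟩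
    obtain ⟨v, rfl⟩ := Ideal.Quotient.mk_surjective v
    rw [← Ideal.Quotient.mk_eq_mk, ← Submodule.Quotient.mk_smul, Submodule.Quotient.mk_eq_zero]
    exact p.mul_mem_right _ hs
  intro N hN
  by_cases h0 : ∃ k, N k = ⊥
  · obtain ⟨k, hk⟩ := h0
    refine ⟨k, fun j v hv => ⟨1, S.one_mem, ?_⟩⟩
    rw [hk, Submodule.mem_bot] at hv
    simp [hv]
  push Not at h0
  refine ⟨0, fun j v _ => ?_⟩
  obtain ⟨w, hw, hw0⟩ := Submodule.exists_mem_ne_zero_of_ne_bot (h0 j)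
  obtain ⟨r, rfl⟩ := Ideal.Quotient.mk_surjective w
  obtain ⟨v, rfl⟩ := Ideal.Quotient.mk_surjective v
  have hr : r ∉ p := fun hr => hw0 (Ideal.Quotient.eq_zero_iff_mem.2 hr)
  have : ¬ Disjoint ((p ⊔ Ideal.span {r} : Ideal R) : Set R) (S : Set R) := by
    intro hd
    obtain ⟨q, hq, hle, hdq⟩ := Ideal.exists_le_prime_disjoint _ S hd
    refine h hp q hq (lt_of_le_of_ne (le_sup_left.trans hle) ?_) hdq
    rintro rfl
    exact hr (hle (Submodule.mem_sup_right (Ideal.mem_span_singleton_self r)))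
  rw [Set.not_disjoint_iff] at this
  obtain ⟨s, hs, hs'⟩ := this
  refine ⟨s, hs', ?_⟩
  obtain ⟨y, hy, z, hz, rfl⟩ := Submodule.mem_sup.1 hs
  obtain ⟨c, rfl⟩ := Ideal.mem_span_singleton'.1 hz
  have : (y + c * r) • (Ideal.Quotient.mk p v) = (c * v) • Ideal.Quotient.mk p r := by
    rw [← Ideal.Quotient.mk_eq_mk, ← Ideal.Quotient.mk_eq_mk, ← Submodule.Quotient.mk_smul,
      ← Submodule.Quotient.mk_smul, Submodule.Quotient.eq]
    have : (y + c * r) • v - (c * v) • r = y * v := by simp only [smul_eq_mul]; ring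
    rw [this]
    exact p.mul_mem_right _ hy
  rw [this]
  exact Submodule.smul_mem _ _ hw

theorem chain_of_fg [IsNoetherianRing R] {S : Submonoid R} (M : Type u) [AddCommGroup M] [Module R M]
    (hM : Module.Finite R M)
    (h : ∀ p ∈ Module.support R M, Disjoint (p.asIdeal : Set R) (S : Set R) → cd S 0 p.asIdeal) :
    (chain S).P M := by
  induction hM using IsNoetherianRing.induction_on_isQuotientEquivQuotientPrime R with
  | subsingleton N => exact SerreClass.zero _ _ inferInstance
  | quotient N p e =>
    refine (chain S).of_equiv e.symm (chain_quot_prime _ (h p ?_))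
    rw [LinearEquiv.support_eq e, Module.support_eq_zeroLocus, Ideal.annihilator_quotient]
    simp
  | exact N1 N2 N3 f g hf hg hfg ih1 ih3 =>
    exact SerreClass.mid _ f g hfg (ih1 fun p hp => h p (Module.support_subset_of_injective f hf hp))
      (ih3 fun p hp => h p (Module.support_subset_of_surjective g hg hp))

namespace Data
variable {a : Ideal R} (K : Data R a) (T : SerreClass R)

theorem exact_ker (f : M →ₗ[R] M) : Function.Exact (ker f).subtype f.rangeRestrict := by
  intro x; simp [Subtype.ext_iff]

theorem melk {x : R} (hx : x ∈ a) (h1 : ∀ i, T.P (K.E i (ker (lsmul R M x))))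
    (h2 : ∀ i, T.P (K.E i (M ⧸ range (lsmul R M x)))) (i : ℕ) : T.P (K.E i M) := by
  set φ := lsmul R M x
  have hs := φ.surjective_rangeRestrict
  have hi := (ker φ).injective_subtype
  have he := exact_ker φ
  refine K.L1 T hi he hs (h1 i) ?_
  have hker : T.P (ker (K.emap i (range φ).subtype)) := by
    cases i with
    | zero => exact K.LK0 T (range φ).injective_subtype (LinearMap.exact_subtype_mkQ _) (Submodule.mkQ_surjective _)
    | succ i => exact K.LK T (range φ).injective_subtype (LinearMap.exact_subtype_mkQ _) (Submodule.mkQ_surjective _) (h2 i)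
  refine T.ext (range (K.emap i φ.rangeRestrict)) (T.of_le ?_ hker) (K.LC T hi he hs (h1 (i+1)))
  rintro _ ⟨e, rfl⟩
  rw [LinearMap.mem_ker, emap_comp]
  have : (range φ).subtype ∘ₗ φ.rangeRestrict = x • (LinearMap.id : M →ₗ[R] M) := by
    ext v; simp [φ]
  rw [this, emap_smul]
  exact K.smul_E hx i e

end Data
end Cof

namespace Cof
open LinearMap (ker range lsmul)

variable {R : Type u} [CommRing R]

def SerreClass.inf (T T' : SerreClass R) : SerreClass R where
  P X _ _ := T.P X ∧ T'.P X
  zero X _ _ h := ⟨T.zero X h, T'.zero X h⟩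
  mid f g h hX hZ := ⟨T.mid f g h hX.1 hZ.1, T'.mid f g h hX.2 hZ.2⟩

/-- modules supported in `V` -/
def supp (V : Set (PrimeSpectrum R)) : SerreClass R where
  P X _ _ := Module.support R X ⊆ V
  zero X _ _ h := by rw [Module.support_eq_empty]; simp
  mid {X Y Z} _ _ _ _ _ _ f g h hX hZ := by
    intro p hp
    by_contra hpV
    have h1 : p ∉ Module.support R X := fun h => hpV (hX h)
    have h2 : p ∉ Module.support R Z := fun h => hpV (hZ h)
    rw [Module.notMem_support_iff'] at h1 h2
    apply (Module.mem_support_iff'.1 hp).elim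
    intro y hy
    obtain ⟨r, hr, hr'⟩ := h2 (g y)
    rw [← map_smul] at hr'
    obtain ⟨x, hx⟩ := (h _).1 hr'
    obtain ⟨r', hr1, hr2⟩ := h1 x
    refine hy (r' * r) (fun hmem => ?_) ?_
    · exact (p.2.mem_or_mem hmem).elim hr1 hr
    · rw [mul_smul, ← hx, ← map_smul, hr2, map_zero]

/-- `a`-torsion modules as a Serre class -/
def ators (a : Ideal R) : SerreClass R where
  P X _ _ := IsTors a X
  zero X _ _ h := fun x _ v => ⟨0, Subsingleton.elim _ _⟩
  mid {X Y Z} _ _ _ _ _ _ f g h hX hZ := by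
    intro x hx v
    obtain ⟨N, hN⟩ := hZ x hx (g v)
    rw [← map_smul] at hN
    obtain ⟨w, hw⟩ := (h _).1 hN
    obtain ⟨N', hN'⟩ := hX x hx w
    exact ⟨N' + N, by rw [pow_add, mul_smul, ← hw, ← map_smul, hN', map_zero]⟩

variable {M : Type u} [AddCommGroup M] [Module R M]

theorem P_of_nilp (T : SerreClass R) {x : R} (h : T.P (ker (lsmul R M x))) (N : ℕ) :
    T.P (ker (lsmul R M (x ^ N))) := by
  induction N with
  | zero =>
    refine T.zero _ ?_
    rw [Submodule.subsingleton_iff_eq_bot, eq_bot_iff]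
    intro v hv
    simpa using hv
  | succ N ih =>
    refine T.mid (Submodule.inclusion (p := ker (lsmul R M x)) (p' := ker (lsmul R M (x ^ (N+1)))) ?_)
      ((lsmul R M x).restrict (p := ker (lsmul R M (x ^ (N+1)))) (q := ker (lsmul R M (x ^ N))) ?_) ?_ h ih
    · intro v hv
      simp only [LinearMap.mem_ker, LinearMap.lsmul_apply] at hv ⊢
      rw [pow_succ, mul_smul, hv, smul_zero]
    · intro v hv
      simp only [LinearMap.mem_ker, LinearMap.lsmul_apply] at hv ⊢
      rwa [← mul_smul, ← pow_succ]
    · intro v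
      constructor
      · intro hv
        exact ⟨⟨v.1, congrArg Subtype.val hv⟩, rfl⟩
      · rintro ⟨w, rfl⟩
        exact Subtype.ext w.2

namespace Data
variable {a : Ideal R} (K : Data R a) (T : SerreClass R)

/-- kernels of endomorphisms in low degree -/
theorem P_ker {t : ℕ} (ht : t ≤ 1) (h : ∀ i ≤ t, T.P (K.E i M)) (φ : M →ₗ[R] M) :
    ∀ i ≤ t, T.P (K.E i (ker φ)) := by
  have hs := φ.surjective_rangeRestrict
  have hi := (ker φ).injective_subtype
  have he := exact_ker φ
  have h0 : T.P (K.E 0 (range φ)) :=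
    K.L30 T (range φ).injective_subtype (LinearMap.exact_subtype_mkQ _) (Submodule.mkQ_surjective _)
      (h 0 (Nat.zero_le _))
  intro i hit
  have hi1 : i ≤ 1 := hit.trans ht
  interval_cases i
  · exact K.L30 T hi he hs (h 0 (Nat.zero_le _))
  · exact K.L3 T hi he hs h0 (h 1 hit)

theorem P_range {t : ℕ} (h : ∀ i ≤ t, T.P (K.E i M)) (φ : M →ₗ[R] M)
    (h' : ∀ i, T.P (K.E i (ker φ))) :
    ∀ i ≤ t, T.P (K.E i (range φ)) := fun i hi =>
  K.L2 T (ker φ).injective_subtype (exact_ker φ) φ.surjective_rangeRestrict (h i hi) (h' (i+1))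

theorem P_coker {t : ℕ} (h : ∀ i ≤ t, T.P (K.E i M)) (φ : M →ₗ[R] M)
    (h' : ∀ i, T.P (K.E i (ker φ))) :
    ∀ i < t, T.P (K.E i (M ⧸ range φ)) := fun i hi =>
  K.L2 T (range φ).injective_subtype (LinearMap.exact_subtype_mkQ _) (Submodule.mkQ_surjective _) (h i hi.le)
    (K.P_range T h φ h' (i+1) hi)

theorem lemK_aux (S : Submonoid R) (Q : SerreClass R)
    (hQS : ∀ (X : Type u) [AddCommGroup X] [Module R X], Q.P X → (chain S).P X)
    {t : ℕ} (ht : t ≤ 1)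
    (hax : ∀ (X : Type u) [AddCommGroup X] [Module R X], Q.P X → (tors S).P X →
      (∀ i < t, T.P (K.E i X)) → ∀ i, T.P (K.E i X))
    (s : Finset R) (hs : Ideal.span (s : Set R) = a) (l : Finset R) :
    ∀ (M : Type u) [AddCommGroup M] [Module R M], l ⊆ s → Q.P M →
      (∀ x ∈ s, x ∉ l → ∃ N : ℕ, ∀ v : M, x ^ N • v = 0) →
      (∀ i ≤ t, T.P (K.E i M)) → ∀ i, T.P (K.E i M) := by
  classical
  induction l using Finset.induction_on with
  | empty =>
    intro M _ _ _ _ hnil h i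
    refine K.P_E T i ?_
    have h0 := (K.P_E0 T).1 (h 0 (Nat.zero_le _))
    rw [← hs] at h0
    rw [← Submodule.torsionBySet_eq_torsionBySet_span] at h0
    refine torsion_induct T (fun x X _ _ => ∃ N : ℕ, ∀ v : X, x ^ N • v = 0) ?_ ?_ s M ?_ h0
    · rintro x X _ _ N ⟨k, hk⟩
      exact ⟨k, fun v => Subtype.ext (hk v)⟩
    · rintro x X _ _ ⟨k, hk⟩ h
      refine T.of_surj (ker (lsmul R X (x ^ k))).subtype ?_ (P_of_nilp T h k)
      intro v
      exact ⟨⟨v, hk v⟩, rfl⟩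
    · intro x hx; exact hnil x hx (by simp)
  | insert x l hxl ih =>
    intro M _ _ hls hQ hnil h
    have hxs : x ∈ s := hls (by simp)
    have hxa : x ∈ a := hs ▸ Submodule.subset_span hxs
    have hls' : l ⊆ s := (Finset.subset_insert _ _).trans hls
    obtain ⟨k, hk⟩ := hQS M hQ (fun j => range (lsmul R M (x ^ j))) (by
      intro i j hij
      rintro _ ⟨v, rfl⟩
      refine ⟨x ^ (j - i) • v, ?_⟩
      simp only [LinearMap.lsmul_apply]
      rw [← mul_smul, ← pow_add]; congr 2; omega)
    set φ := lsmul R M (x ^ k) with hφ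
    have hK : ∀ i, T.P (K.E i (ker φ)) := by
      refine ih _ hls' (Q.sub _ hQ) ?_ (K.P_ker T ht h φ)
      intro y hy hyl
      by_cases hyx : y = x
      · subst hyx
        exact ⟨k, fun v => Subtype.ext v.2⟩
      · obtain ⟨N, hN⟩ := hnil y hy (by simp [hyx, hyl])
        exact ⟨N, fun v => Subtype.ext (hN v)⟩
    have hM'' := K.P_range T h φ hK
    have hQ'' : Q.P (range φ) := Q.sub _ hQ
    set ψ := lsmul R (range φ) x with hψ
    have hK'' : ∀ i, T.P (K.E i (ker ψ)) := by
      refine ih _ hls' (Q.sub _ hQ'') ?_ (K.P_ker T ht hM'' ψ)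
      intro y hy hyl
      by_cases hyx : y = x
      · subst hyx
        exact ⟨1, fun v => Subtype.ext (by rw [pow_one]; exact v.2)⟩
      · obtain ⟨N, hN⟩ := hnil y hy (by simp [hyx, hyl])
        exact ⟨N, fun v => Subtype.ext (Subtype.ext (hN v))⟩
    have hB : ∀ i, T.P (K.E i (range φ ⧸ range ψ)) := by
      refine hax _ (Q.quot _ hQ'') ?_ (K.P_coker T hM'' ψ hK'')
      intro v
      obtain ⟨⟨v, hv⟩, rfl⟩ := Submodule.mkQ_surjective _ v
      obtain ⟨r, hr, w, hw⟩ := hk (k+1) v hv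
      refine ⟨r, hr, ?_⟩
      rw [← map_smul, Submodule.mkQ_apply, Submodule.Quotient.mk_eq_zero]
      refine ⟨⟨x ^ k • w, ⟨w, rfl⟩⟩, ?_⟩
      ext
      change x • x ^ k • w = r • v
      rw [← mul_smul, ← pow_succ']; exact hw
    have hr := K.melk T hxa hK'' hB
    intro i
    exact K.L1 T (ker φ).injective_subtype (exact_ker φ) φ.surjective_rangeRestrict (hK i) (hr i)

theorem lemK (ha : a.FG) (S : Submonoid R) (Q : SerreClass R)
    (hQS : ∀ (X : Type u) [AddCommGroup X] [Module R X], Q.P X → (chain S).P X)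
    {t : ℕ} (ht : t ≤ 1)
    (hax : ∀ (X : Type u) [AddCommGroup X] [Module R X], Q.P X → (tors S).P X →
      (∀ i < t, T.P (K.E i X)) → ∀ i, T.P (K.E i X))
    (hQ : Q.P M) (h : ∀ i ≤ t, T.P (K.E i M)) (i : ℕ) : T.P (K.E i M) := by
  obtain ⟨s, hs⟩ := ha
  exact K.lemK_aux T S Q hQS ht hax s hs s M subset_rfl hQ (fun x hx hx' => (hx' hx).elim) h i

end Data
end Cof

namespace Cof
open LinearMap (ker range lsmul)

variable {R : Type u} [CommRing R]
variable {M : Type u} [AddCommGroup M] [Module R M]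

theorem tors_of_socle {a : Ideal R} (ha : a.FG) {W : Submonoid R} (hM : IsTors a M)
    (h : (tors W).P (Submodule.torsionBySet R M a)) : (tors W).P M := by
  obtain ⟨s, rfl⟩ := ha
  refine torsion_induct (tors W) (fun x X _ _ => ∀ v : X, ∃ N : ℕ, x ^ N • v = 0) ?_ ?_ s M ?_ ?_
  · intro x X _ _ N h v
    obtain ⟨k, hk⟩ := h v
    exact ⟨k, Subtype.ext hk⟩
  · intro x X _ _ h1 h2 v
    obtain ⟨e, he⟩ := h1 v
    induction e generalizing v with
    | zero => exact ⟨1, W.one_mem, by simpa using he⟩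
    | succ e ih =>
      obtain ⟨r, hr, h3⟩ := h2 ⟨x ^ e • v, by
        rw [LinearMap.mem_ker, LinearMap.lsmul_apply, ← mul_smul, ← pow_succ', he]⟩
      have h3 : r • x ^ e • v = 0 := congrArg Subtype.val h3
      obtain ⟨t, ht, h4⟩ := ih (r • v) (by rw [smul_comm, h3])
      exact ⟨t * r, W.mul_mem ht hr, by rw [mul_smul, h4]⟩
  · exact fun x hx v => hM x (Submodule.subset_span hx) v
  · rwa [← Submodule.torsionBySet_eq_torsionBySet_span] at h

theorem not_mem_support_of_tors {p : PrimeSpectrum R} (h : (tors p.asIdeal.primeCompl).P M) :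
    p ∉ Module.support R M := by
  rw [Module.notMem_support_iff']
  intro v
  obtain ⟨s, hs, h⟩ := h v
  exact ⟨s, hs, h⟩

theorem tors_mono {W W' : Submonoid R} (hW : W ≤ W') (h : (tors W).P M) : (tors W').P M := by
  intro v
  obtain ⟨s, hs, h⟩ := h v
  exact ⟨s, hW hs, h⟩

theorem fg_tors_single {S : Submonoid R} {N : Submodule R M} (hN : N.FG)
    (h : ∀ v ∈ N, ∃ s ∈ S, s • v = 0) : ∃ s ∈ S, ∀ v ∈ N, s • v = 0 := by
  induction N, hN using Submodule.fg_induction with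
  | singleton v =>
    obtain ⟨s, hs, h⟩ := h v (Submodule.mem_span_singleton_self v)
    refine ⟨s, hs, fun w hw => ?_⟩
    obtain ⟨c, rfl⟩ := Submodule.mem_span_singleton.1 hw
    rw [smul_comm, h, smul_zero]
  | sup N N' _ _ ih ih' =>
    obtain ⟨s, hs, h1⟩ := ih fun v hv => h v (Submodule.mem_sup_left hv)
    obtain ⟨s', hs', h1'⟩ := ih' fun v hv => h v (Submodule.mem_sup_right hv)
    refine ⟨s * s', S.mul_mem hs hs', fun v hv => ?_⟩
    obtain ⟨y, hy, z, hz, rfl⟩ := Submodule.mem_sup.1 hv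
    rw [smul_add, mul_smul s s' z, h1' z hz, mul_comm, mul_smul, h1 y hy]
    simp

/-- `V(I)` and the support, up to `W` -/
theorem ann_le_of_support {a : Ideal R} (ha : a.FG) {W : Submonoid R} (hM : IsTors a M)
    (F : Submodule R (Submodule.torsionBySet R M a)) (hF : (tors W).P (_ ⧸ F))
    {p : PrimeSpectrum R} (hp : p ∈ Module.support R M) (hpW : Disjoint (p.asIdeal : Set R) (W : Set R)) :
    Module.annihilator R F ≤ p.asIdeal := by
  intro r hr
  by_contra hrp
  refine not_mem_support_of_tors (tors_of_socle ha hM ?_) hp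
  intro v
  obtain ⟨s, hs, h⟩ := hF (F.mkQ v)
  rw [← map_smul, Submodule.mkQ_apply, Submodule.Quotient.mk_eq_zero] at h
  refine ⟨r * s, ?_, ?_⟩
  · refine Submonoid.mul_mem _ hrp (fun h => ?_)
    exact Set.disjoint_left.1 hpW h hs
  · rw [mul_smul]
    exact congrArg Subtype.val (Module.mem_annihilator.1 hr ⟨_, h⟩)

theorem mem_support_of_ann_le (N : Submodule R M) (hN : N.FG)
    {p : PrimeSpectrum R} (hp : Module.annihilator R N ≤ p.asIdeal) : p ∈ Module.support R M := by
  have : Module.Finite R N := Module.Finite.iff_fg.2 hN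
  refine Module.support_subset_of_injective N.subtype N.injective_subtype ?_
  rw [Module.support_eq_zeroLocus]
  exact hp

/-- complement of the union of the minimal primes of `I` disjoint from `W` -/
def gS (I : Ideal R) (W : Submonoid R) : Submonoid R where
  carrier := {s | ∀ p ∈ I.minimalPrimes, Disjoint (p : Set R) (W : Set R) → s ∉ p}
  one_mem' := fun p hp _ h => hp.1.1.ne_top ((Ideal.eq_top_iff_one p).2 h)
  mul_mem' := fun {s t} hs ht p hp hW h => (hp.1.1.mem_or_mem h).elim (hs p hp hW) (ht p hp hW)

theorem le_gS (I : Ideal R) (W : Submonoid R) : W ≤ gS I W :=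
  fun _ hs _ _ hW h => Set.disjoint_left.1 hW h hs

theorem cd_gS [IsNoetherianRing R] {I : Ideal R} {W : Submonoid R} {p : Ideal R} [p.IsPrime] (hp : I ≤ p) :
    cd (gS I W) 0 p := by
  intro q hq hpq hd
  have hfin : {p ∈ I.minimalPrimes | Disjoint (p : Set R) (W : Set R)}.Finite :=
    (Ideal.finite_minimalPrimes_of_isNoetherianRing R I).subset (Set.sep_subset _ _)
  have : (q : Set R) ⊆ ⋃ p ∈ hfin.toFinset, ((p : Ideal R) : Set R) := by
    intro s hs
    have : s ∉ gS I W := Set.disjoint_left.1 hd hs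
    have : ¬ ∀ p ∈ I.minimalPrimes, Disjoint (p : Set R) (W : Set R) → s ∉ p := this
    push Not at this
    obtain ⟨p, h1, h2, h3⟩ := this
    simp only [Set.mem_iUnion]
    exact ⟨p, hfin.mem_toFinset.2 ⟨h1, h2⟩, h3⟩
  obtain ⟨p0, hp0, hq0⟩ := (Ideal.subset_union_prime (f := id) ⊥ ⊥ (fun i hi _ _ => by
    simp only [Set.Finite.mem_toFinset] at hi; exact hi.1.1.1)).1 this
  simp only [Set.Finite.mem_toFinset] at hp0
  exact hpq.not_ge (hq0.trans (hp0.1.2 ⟨inferInstance, hp⟩ (hpq.le.trans hq0)))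

theorem chain_of_fgMod [IsNoetherianRing R] {W S : Submonoid R} (hWS : W ≤ S) (F : Submodule R M)
    (hF : F.FG) (hF' : (tors W).P (M ⧸ F))
    (h : ∀ p ∈ Module.support R F, Disjoint (p.asIdeal : Set R) (S : Set R) → cd S 0 p.asIdeal) :
    (chain S).P M :=
  (chain S).ext F (chain_of_fg F (Module.Finite.iff_fg.2 hF) h) (chain_of_tors (tors_mono hWS hF'))

namespace Data
variable [IsNoetherianRing R] {a : Ideal R} (K : Data R a)

theorem fin0 (W : Submonoid R) (hM : IsTors a M)
    (hd : ∀ p ∈ Module.support R M, Disjoint (p.asIdeal : Set R) (W : Set R) → cd W 0 p.asIdeal)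
    (h : (fgMod (tors W)).P (K.E 0 M)) (i : ℕ) : (fgMod (tors W)).P (K.E i M) := by
  have ha : a.FG := IsNoetherian.noetherian a
  refine K.lemK _ ha W (chain W) (fun _ _ _ h => h) (Nat.zero_le 1) ?_ ?_
    (fun i hi => by obtain rfl : i = 0 := by omega
                    exact h) i
  · intro X _ _ _ hX _ i
    exact fgMod_of _ _ (K.P_E _ i hX)
  · rw [K.P_E0] at h
    obtain ⟨F, hF, hF'⟩ := h
    refine chain_of_socle ha hM (chain_of_fgMod le_rfl F hF hF' fun p hp => hd p ?_)
    exact Module.support_subset_of_injective _ (Submodule.injective_subtype _)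
      (Module.support_subset_of_injective _ F.injective_subtype hp)

theorem chain_gS {W : Submonoid R} (hM : IsTors a M)
    (F : Submodule R (Submodule.torsionBySet R M a)) (hFG : F.FG) (hF : (tors W).P (_ ⧸ F)) :
    (chain (gS (Module.annihilator R F) W)).P M := by
  have ha : a.FG := IsNoetherian.noetherian a
  refine chain_of_socle ha hM (chain_of_fgMod (le_gS _ _) F hFG hF fun p hp _ => cd_gS ?_)
  exact Module.annihilator_le_of_mem_support hp

theorem fin1 (W : Submonoid R) (hM : IsTors a M)
    (hd : ∀ p ∈ Module.support R M, Disjoint (p.asIdeal : Set R) (W : Set R) → cd W 1 p.asIdeal)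
    (h : ∀ i ≤ 1, (fgMod (tors W)).P (K.E i M)) (i : ℕ) : (fgMod (tors W)).P (K.E i M) := by
  have ha : a.FG := IsNoetherian.noetherian a
  have h0 := h 0 (Nat.zero_le _)
  rw [K.P_E0] at h0
  obtain ⟨F, hFG, hF⟩ := h0
  set I := Module.annihilator R F
  set Q : SerreClass R := (chain (gS I W)).inf ((ators a).inf
    (supp {p | Disjoint (p.asIdeal : Set R) (W : Set R) → I ≤ p.asIdeal}))
  refine K.lemK _ ha (gS I W) Q (fun _ _ _ h => h.1) le_rfl ?_ ?_ h i
  · intro X _ _ hQ hX hE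
    refine K.fin0 W hQ.2.1 ?_ (hE 0 Nat.zero_lt_one)
    intro p hp hpW
    have hIp := hQ.2.2 hp hpW
    obtain ⟨p0, hp0, hle⟩ := Ideal.exists_minimalPrimes_le hIp
    have hp0W : Disjoint (p0 : Set R) (W : Set R) := hpW.mono_left hle
    have := hp0.1.1
    refine hd ⟨p0, hp0.1.1⟩ ?_ hp0W p.asIdeal p.2 (lt_of_le_of_ne hle ?_) hpW
    · refine Module.support_subset_of_injective _ (Submodule.injective_subtype (Submodule.torsionBySet R M a))
        (mem_support_of_ann_le F hFG hp0.1.2)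
    · rintro rfl
      obtain ⟨v, hv⟩ := Module.mem_support_iff'.1 hp
      obtain ⟨s, hs, hsv⟩ := hX v
      exact hv s (hs _ hp0 hpW) hsv
  · exact ⟨chain_gS hM F hFG hF, hM, fun p hp hpW => ann_le_of_support ha hM F hF hp hpW⟩

/-- generic finiteness -/
theorem generic (hM : IsTors a M) (h : ∀ i ≤ 1, Module.Finite R (K.E i M)) (i : ℕ) :
    (gen (gS (Module.annihilator R (Submodule.torsionBySet R M a)) ⊥)).P (K.E i M) := by
  have ha : a.FG := IsNoetherian.noetherian a
  have h0 : Module.Finite R (Submodule.torsionBySet R M a) := (K.P_E0 (fg R)).1 (h 0 (Nat.zero_le _))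
  set I := Module.annihilator R (Submodule.torsionBySet R M a)
  set S := gS I ⊥
  refine K.lemK (gen S) ha S ((chain S).inf (ators a)) (fun _ _ _ h => h.1) le_rfl ?_ ?_
    (fun i hi => ⟨1, S.one_mem, fgMod_of_fg _ _ (h i hi)⟩) i
  · intro X _ _ hQ hX hE i
    have hE0 := hE 0 Nat.zero_lt_one
    rw [K.P_E0] at hE0
    obtain ⟨y, hy, F, hFG, hF⟩ := hE0
    obtain ⟨s, hs, hsF⟩ := fg_tors_single (S := S) hFG (fun v _ => by
      obtain ⟨s, hs, h⟩ := hX v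
      exact ⟨s, hs, Subtype.ext h⟩)
    refine ⟨y * s, S.mul_mem hy hs, fgMod_of _ _ (K.P_E _ i (tors_of_socle ha hQ.2 ?_))⟩
    intro v
    obtain ⟨_, ⟨k, rfl⟩, h⟩ := hF (F.mkQ v)
    have h : F.mkQ (y ^ k • v) = 0 := by rw [map_smul]; exact h
    rw [Submodule.mkQ_apply, Submodule.Quotient.mk_eq_zero] at h
    refine ⟨(y * s) ^ (k + 1), ⟨_, rfl⟩, ?_⟩
    have : (y * s) ^ (k+1) = (y * s ^ k) * (s * y ^ k) := by ring
    rw [this, mul_smul, mul_smul s, hsF _ h, smul_zero]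
  · refine ⟨?_, hM⟩
    have := chain_gS (W := ⊥) hM ⊤ Module.Finite.fg_top (SerreClass.zero _ _ inferInstance)
    have hI : Module.annihilator R (⊤ : Submodule R (Submodule.torsionBySet R M a)) = I :=
      LinearEquiv.annihilator_eq Submodule.topEquiv
    rwa [hI] at this

end Data
end Cof

namespace Cof

/-- the properties of the `y`-adic completion that are used -/
structure Compl (R : Type u) [CommRing R] (y : R) (R' : Type u) [CommRing R'] [Algebra R R'] : Prop where
  flat : Module.Flat R R'
  noeth : IsNoetherianRing R'
  jac : ∀ m : Ideal R', m.IsMaximal → algebraMap R R' y ∈ m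
  surj : ∀ r' : R', ∃ (r : R) (t : R'), r' = algebraMap R R' r + algebraMap R R' y * t
  inj : ∀ (r : R) (t : R'), algebraMap R R' r = algebraMap R R' y * t → ∃ s, r = y * s
  lim : ∀ c : ℕ → R, ∃ c' : R', ∀ N, ∃ t : R',
    c' = algebraMap R R' (∑ k ∈ Finset.range N, c k * y ^ k) + algebraMap R R' y ^ N * t

section
variable {R : Type u} [CommRing R] (y : R)

theorem trunc_mul_aux (n : ℕ) (f g : PowerSeries R) :
    (PowerSeries.trunc n f).eval y * (PowerSeries.trunc n g).eval y -
      (PowerSeries.trunc n (f * g)).eval y ∈ Ideal.span {y} ^ n := by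
  rw [Ideal.span_singleton_pow, Ideal.mem_span_singleton, ← Polynomial.eval_mul, ← Polynomial.eval_sub]
  have h : Polynomial.X ^ n ∣ PowerSeries.trunc n f * PowerSeries.trunc n g - PowerSeries.trunc n (f * g) := by
    rw [Polynomial.X_pow_dvd_iff]
    intro d hd
    rw [Polynomial.coeff_sub, PowerSeries.coeff_trunc, if_pos hd,
      PowerSeries.coeff_mul_eq_coeff_trunc_mul_trunc f g hd, ← Polynomial.coe_mul, Polynomial.coeff_coe, sub_self]
  obtain ⟨q, hq⟩ := h
  rw [hq]
  simp

theorem trunc_le_aux {m n : ℕ} (h : m ≤ n) (f : PowerSeries R) :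
    (PowerSeries.trunc n f).eval y - (PowerSeries.trunc m f).eval y ∈ Ideal.span {y} ^ m := by
  rw [Ideal.span_singleton_pow, Ideal.mem_span_singleton, ← Polynomial.eval_sub]
  have h : Polynomial.X ^ m ∣ PowerSeries.trunc n f - PowerSeries.trunc m f := by
    rw [Polynomial.X_pow_dvd_iff]
    intro d hd
    rw [Polynomial.coeff_sub, PowerSeries.coeff_trunc, if_pos (hd.trans_le h), PowerSeries.coeff_trunc,
      if_pos hd, sub_self]
  obtain ⟨q, hq⟩ := h
  rw [hq]
  simp

noncomputable def psn (n : ℕ) : PowerSeries R →+* R ⧸ (Ideal.span {y} : Ideal R) ^ n where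
  toFun f := Ideal.Quotient.mk _ ((PowerSeries.trunc n f).eval y)
  map_zero' := by simp
  map_one' := by
    cases n with
    | zero =>
      have : Subsingleton (R ⧸ (Ideal.span {y} : Ideal R) ^ 0) := by
        rw [pow_zero, Ideal.one_eq_top]; infer_instance
      exact Subsingleton.elim _ _
    | succ n => simp
  map_add' f g := by simp
  map_mul' f g := by
    rw [← map_mul]
    symm
    rw [Ideal.Quotient.eq]
    exact trunc_mul_aux y n f g

theorem psn_compat {m n : ℕ} (h : m ≤ n) :
    (Ideal.Quotient.factorPow (Ideal.span {y} : Ideal R) h).comp (psn y n) = psn y m := by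
  ext f
  change Ideal.Quotient.mk _ _ = Ideal.Quotient.mk _ _
  rw [Ideal.Quotient.eq]
  exact trunc_le_aux y h f

noncomputable def ps : PowerSeries R →+* AdicCompletion (Ideal.span {y} : Ideal R) R :=
  AdicCompletion.liftRingHom _ (psn y) (psn_compat y)

theorem eval_ps (n : ℕ) (f : PowerSeries R) :
    AdicCompletion.evalₐ _ n (ps y f) = Ideal.Quotient.mk _ ((PowerSeries.trunc n f).eval y) :=
  AdicCompletion.evalₐ_liftRingHom _ (psn y) (psn_compat y) n f

theorem ps_C (r : R) : ps y (PowerSeries.C r) = algebraMap R _ r := by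
  apply AdicCompletion.ext_evalₐ
  intro n
  rw [eval_ps, AlgHom.commutes]
  cases n with
  | zero => 
    have : Subsingleton (R ⧸ (Ideal.span {y} : Ideal R) ^ 0) := by
        rw [pow_zero, Ideal.one_eq_top]; infer_instance
    exact Subsingleton.elim _ _
  | succ n => simp

theorem ps_X : ps y PowerSeries.X = algebraMap R _ y := by
  apply AdicCompletion.ext_evalₐ
  intro n
  rw [eval_ps, AlgHom.commutes]
  change Ideal.Quotient.mk _ _ = Ideal.Quotient.mk _ _
  rw [Ideal.Quotient.eq]
  have h := trunc_le_aux y (Nat.le_add_right n 2) PowerSeries.X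
  have h2 : PowerSeries.trunc (n+2) (PowerSeries.X : PowerSeries R) = Polynomial.X := by
    ext d
    rw [PowerSeries.coeff_trunc, PowerSeries.coeff_X, Polynomial.coeff_X]
    split_ifs <;> first | rfl | omega
  rw [h2, Polynomial.eval_X] at h
  rw [← neg_mem_iff]; simpa using h

theorem ps_lim (c : ℕ → R) (N : ℕ) : ∃ t, ps y (PowerSeries.mk c) =
    algebraMap R _ (∑ k ∈ Finset.range N, c k * y ^ k) + algebraMap R _ y ^ N * t := by
  have h : (PowerSeries.X : PowerSeries R) ^ N ∣ PowerSeries.mk c - (PowerSeries.trunc N (PowerSeries.mk c) : PowerSeries R) := by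
    rw [PowerSeries.X_pow_dvd_iff]
    intro m hm
    rw [map_sub, Polynomial.coeff_coe, PowerSeries.coeff_trunc, if_pos hm, sub_self]
  obtain ⟨g, hg⟩ := h
  refine ⟨ps y g, ?_⟩
  rw [sub_eq_iff_eq_add] at hg
  rw [hg, map_add, map_mul, map_pow, ps_X, add_comm]
  congr 1
  have : (PowerSeries.trunc N (PowerSeries.mk c) : PowerSeries R) =
      ∑ k ∈ Finset.range N, PowerSeries.C (c k) * PowerSeries.X ^ k := by
    ext d
    simp [PowerSeries.coeff_trunc, PowerSeries.coeff_X_pow]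
  rw [this]
  simp [ps_C, ps_X]

theorem compl_surj (r' : AdicCompletion (Ideal.span {y} : Ideal R) R) :
    ∃ (r : R) (t : _), r' = algebraMap R _ r + algebraMap R _ y * t := by
  obtain ⟨r, hr⟩ := Ideal.Quotient.mk_surjective (AdicCompletion.evalOneₐ _ r')
  have h : r' - algebraMap R _ r ∈ RingHom.ker (AdicCompletion.evalOneₐ (Ideal.span {y} : Ideal R)).toRingHom := by
    rw [RingHom.mem_ker]
    change AdicCompletion.evalOneₐ _ _ = 0
    rw [map_sub, AlgHom.commutes, ← hr]
    exact sub_self _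
  rw [AdicCompletion.ker_evalOneₐ_eq_map _ (Submodule.fg_span_singleton y), Ideal.map_span,
    Set.image_singleton, Ideal.mem_span_singleton] at h
  obtain ⟨t, ht⟩ := h
  exact ⟨r, t, by rw [← ht]; ring⟩

theorem ps_surj : Function.Surjective (ps y) := by
  intro r'
  choose F G hFG using compl_surj y
  let seq : ℕ → AdicCompletion (Ideal.span {y} : Ideal R) R := fun n => G^[n] r'
  have hseq : ∀ N, r' = algebraMap R _ (∑ k ∈ Finset.range N, F (seq k) * y ^ k) + algebraMap R _ y ^ N * seq N := by
    intro N
    induction N with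
    | zero => simp [seq]
    | succ N ih =>
      have h1 : seq (N+1) = G (seq N) := Function.iterate_succ_apply' G N r'
      rw [Finset.sum_range_succ, h1]
      conv_lhs => rw [ih, hFG (seq N)]
      simp only [map_add, map_mul, map_pow]
      ring
  refine ⟨PowerSeries.mk fun k => F (seq k), ?_⟩
  apply AdicCompletion.ext_evalₐ
  intro n
  obtain ⟨t, ht⟩ := ps_lim y (fun k => F (seq k)) n
  rw [ht]
  conv_rhs => rw [hseq n]
  have hy : (AdicCompletion.evalₐ (Ideal.span {y} : Ideal R) n) (algebraMap R _ y ^ n) = 0 := by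
    rw [← map_pow, AlgHom.commutes]
    refine Ideal.Quotient.eq_zero_iff_mem.2 ?_
    exact Ideal.pow_mem_pow (Ideal.mem_span_singleton_self y) n
  rw [map_add, map_add, map_mul, map_mul, hy, zero_mul, zero_mul]

theorem exists_compl [IsNoetherianRing R] :
    Compl R y (AdicCompletion (Ideal.span {y} : Ideal R) R) where
  flat := AdicCompletion.flat_of_isNoetherian _
  noeth := isNoetherianRing_of_surjective _ _ (ps y) (ps_surj y)
  jac m hm := by
    by_contra h
    obtain ⟨t, q, hq, hadd⟩ := hm.exists_inv h
    obtain ⟨g, rfl⟩ := ps_surj y t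
    have : IsUnit (1 - g * PowerSeries.X : PowerSeries R) := by
      rw [PowerSeries.isUnit_iff_constantCoeff]; simp
    have := this.map (ps y)
    rw [map_sub, map_one, map_mul, ps_X, ← hadd, add_sub_cancel_left] at this
    exact hm.ne_top (Ideal.eq_top_of_isUnit_mem _ hq this)
  surj := compl_surj y
  inj r t h := by
    have h1 := congrArg (AdicCompletion.evalOneₐ (Ideal.span {y} : Ideal R)) h
    rw [map_mul, AlgHom.commutes, AlgHom.commutes] at h1
    have h2 : algebraMap R (R ⧸ (Ideal.span {y} : Ideal R)) y = 0 :=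
      Ideal.Quotient.eq_zero_iff_mem.2 (Ideal.mem_span_singleton_self y)
    rw [h2, zero_mul] at h1
    have h3 : r ∈ Ideal.span {y} := Ideal.Quotient.eq_zero_iff_mem.1 h1
    rw [Ideal.mem_span_singleton] at h3
    exact h3
  lim c := ⟨ps y (PowerSeries.mk c), fun N => ps_lim y c N⟩
end
end Cof

namespace Cof
open TensorProduct
namespace Data

section
variable {R : Type u} [CommRing R] {a : Ideal R} (K : Data R a)
variable (R' : Type u) [CommRing R'] [Algebra R R']
variable (M : Type u) [AddCommGroup M] [Module R M]

theorem bc_htpy (x : R') (hx : x ∈ a.map (algebraMap R R')) :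
    ∃ s : ∀ j, Matrix (Fin (K.n j)) (Fin (K.n (j+1))) R',
    s 0 * (K.A 0).map (algebraMap R R') = x • 1 ∧
      ∀ j, s (j+1) * (K.A (j+1)).map (algebraMap R R') + (K.A j).map (algebraMap R R') * s j = x • 1 := by
  induction hx using Submodule.span_induction with
  | mem x hx =>
    obtain ⟨x, hx, rfl⟩ := hx
    obtain ⟨s, h0, h1⟩ := K.htpy x hx
    refine ⟨fun j => (s j).map (algebraMap R R'), ?_, fun j => ?_⟩
    · rw [← Matrix.map_mul, h0]
      ext i j
      by_cases h : i = j <;> simp [h, Matrix.one_apply]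
    · rw [← Matrix.map_mul, ← Matrix.map_mul, ← Matrix.map_add _ (map_add _), h1]
      ext i j
      by_cases h : i = j <;> simp [h, Matrix.one_apply]
  | zero => exact ⟨fun _ => 0, by simp, fun j => by simp⟩
  | add x y _ _ hx hy =>
    obtain ⟨s, h0, h1⟩ := hx
    obtain ⟨t, g0, g1⟩ := hy
    refine ⟨fun j => s j + t j, ?_, fun j => ?_⟩
    · beta_reduce
      rw [Matrix.add_mul, h0, g0, add_smul]
    · beta_reduce
      rw [Matrix.add_mul, Matrix.mul_add, add_smul, ← h1 j, ← g1 j]; abel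
  | smul r x _ hx =>
    obtain ⟨s, h0, h1⟩ := hx
    refine ⟨fun j => r • s j, ?_, fun j => ?_⟩
    · beta_reduce
      rw [Matrix.smul_mul, h0, smul_assoc]
    · beta_reduce
      rw [Matrix.smul_mul, Matrix.mul_smul, ← smul_add, h1, smul_assoc]

abbrev bc : Data R' (a.map (algebraMap R R')) where
  n := K.n
  n0 := K.n0
  A j := (K.A j).map (algebraMap R R')
  comp j := by rw [← Matrix.map_mul, K.comp]; simp
  mem k l := Ideal.mem_map_of_mem _ (K.mem k l)
  htpy := K.bc_htpy R'

noncomputable def cbc (i : ℕ) : R' ⊗[R] (K.C i M) ≃ₗ[R'] (K.bc R').C i (R' ⊗[R] M) :=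
  TensorProduct.piRight R R' R' (fun _ : Fin (K.n i) => M)

theorem cbc_tmul (i : ℕ) (r : R') (m : K.C i M) (k) : K.cbc R' M i (r ⊗ₜ m) k = r ⊗ₜ m k :=
  congrFun (TensorProduct.piRightHom_tmul ..) k

theorem cbc_d (i : ℕ) (t : R' ⊗[R] (K.C i M)) :
    (K.bc R').d i (R' ⊗[R] M) (K.cbc R' M i t) = K.cbc R' M (i+1) ((K.d i M).baseChange R' t) := by
  induction t with
  | zero => simp
  | add x y hx hy => simp only [map_add, hx, hy]
  | tmul r m =>
    ext k
    rw [LinearMap.baseChange_tmul, cbc_tmul]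
    change ∑ l, (algebraMap R R' (K.A i k l)) • (K.cbc R' M i (r ⊗ₜ m)) l = r ⊗ₜ (∑ l, K.A i k l • m l)
    rw [tmul_sum]
    refine Finset.sum_congr rfl fun l _ => ?_
    refine (congrArg _ (K.cbc_tmul R' M i r m l)).trans ?_
    rw [algebraMap_smul, tmul_smul]

variable [Module.Flat R R']

noncomputable def zbc (i : ℕ) : R' ⊗[R] (K.Z i M) →ₗ[R'] (K.bc R').Z i (R' ⊗[R] M) :=
  ((K.cbc R' M i).toLinearMap ∘ₗ (K.Z i M).subtype.baseChange R').codRestrict _ (fun t => by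
    rw [mem_Z]
    change (K.bc R').d i (R' ⊗[R] M) (K.cbc R' M i _) = 0
    rw [cbc_d, ← LinearMap.comp_apply, ← LinearMap.baseChange_comp]
    have : K.d i M ∘ₗ (K.Z i M).subtype = 0 := by ext1 z; exact z.2
    rw [this]; simp)

theorem zbc_coe (i : ℕ) (t) : (K.zbc R' M i t : (K.bc R').C i (R' ⊗[R] M)) =
    K.cbc R' M i ((K.Z i M).subtype.baseChange R' t) := rfl

theorem zbc_inj (i : ℕ) : Function.Injective (K.zbc R' M i) := by
  intro s t h
  have h1 : K.cbc R' M i ((K.Z i M).subtype.baseChange R' s) = K.cbc R' M i ((K.Z i M).subtype.baseChange R' t) :=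
    congrArg Subtype.val h
  have h2 := (K.cbc R' M i).injective h1
  exact Module.Flat.lTensor_preserves_injective_linearMap (M := R') (K.Z i M).subtype (K.Z i M).injective_subtype h2

theorem zbc_surj (i : ℕ) : Function.Surjective (K.zbc R' M i) := by
  intro z
  obtain ⟨t, ht⟩ := (K.cbc R' M i).surjective z.1
  have h : (K.d i M).baseChange R' t = 0 := by
    apply (K.cbc R' M (i+1)).injective
    rw [← cbc_d, ht, map_zero]
    exact z.2
  have hex : Function.Exact (K.Z i M).subtype (K.d i M) := LinearMap.exact_subtype_ker_map _
  obtain ⟨s, hs⟩ := (Module.Flat.lTensor_exact R' hex t).1 h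
  refine ⟨s, ?_⟩
  ext1
  rw [zbc_coe, ← ht]
  congr 1

theorem zbc_ker (i : ℕ) (t : R' ⊗[R] (K.Z i M)) :
    (K.cls i M).baseChange R' t = 0 ↔ (K.bc R').cls i (R' ⊗[R] M) (K.zbc R' M i t) = 0 := by
  constructor
  · intro h
    let W := (K.B i M).comap (K.Z i M).subtype
    let g : W →ₗ[R] K.Z i M := W.subtype
    have hex : Function.Exact g (K.cls i M) :=
      LinearMap.exact_subtype_mkQ _
    obtain ⟨s, rfl⟩ := (_root_.lTensor_exact (M := W) (N := K.Z i M) (P := K.E i M) R' hex (K.cls_surj i) t).1 h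
    rw [cls_eq_zero]
    clear h
    induction s with
    | zero => simp
    | add x y hx hy =>
      rw [map_add, map_add]
      exact Submodule.add_mem _ hx hy
    | tmul r w =>
      rw [LinearMap.lTensor_tmul, zbc_coe, LinearMap.baseChange_tmul]
      obtain ⟨⟨w, hw⟩, hw'⟩ := w
      have hw' : w ∈ K.B i M := hw'
      change K.cbc R' M i (r ⊗ₜ w) ∈ _
      cases i with
      | zero =>
        have : w = 0 := hw'
        subst this
        simp
      | succ i =>
        obtain ⟨v, rfl⟩ := hw'
        exact ⟨K.cbc R' M i (r ⊗ₜ v), by rw [cbc_d, LinearMap.baseChange_tmul]⟩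
  · intro h
    rw [cls_eq_zero] at h
    cases i with
    | zero =>
      have h : (K.zbc R' M 0 t).1 = 0 := h
      have : t = 0 := K.zbc_inj R' M 0 (by rw [map_zero]; exact Subtype.ext h)
      rw [this, map_zero]
    | succ i =>
      obtain ⟨v', hv'⟩ := h
      obtain ⟨v, rfl⟩ := (K.cbc R' M i).surjective v'
      let dz : K.C i M →ₗ[R] K.Z (i+1) M := (K.d i M).codRestrict _ (fun m => K.d_d i m)
      have : t = dz.baseChange R' v := by
        apply K.zbc_inj R' M
        ext1
        rw [← hv', cbc_d, zbc_coe, ← LinearMap.comp_apply, ← LinearMap.baseChange_comp]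
        rfl
      rw [this, ← LinearMap.comp_apply, ← LinearMap.baseChange_comp]
      have h0 : K.cls (i+1) M ∘ₗ dz = 0 := by
        refine LinearMap.ext fun m => ?_
        refine (K.cls_eq_zero (z := dz m)).2 ?_
        exact ⟨m, rfl⟩
      rw [h0]; simp

/-- flat base change -/
theorem ebc (i : ℕ) : Nonempty (R' ⊗[R] K.E i M ≃ₗ[R'] (K.bc R').E i (R' ⊗[R] M)) := by
  let ρ := (K.cls i M).baseChange R'
  let ψ := (K.bc R').cls i (R' ⊗[R] M) ∘ₗ K.zbc R' M i
  have hρ : Function.Surjective ρ := LinearMap.lTensor_surjective R' (K.cls_surj i)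
  have hψ : Function.Surjective ψ := (Data.cls_surj _ i).comp (K.zbc_surj R' M i)
  have hk : LinearMap.ker ρ = LinearMap.ker ψ := by
    ext t; exact K.zbc_ker R' M i t
  exact ⟨(ρ.quotKerEquivOfSurjective hρ).symm ≪≫ₗ Submodule.quotEquivOfEq _ _ hk ≪≫ₗ ψ.quotKerEquivOfSurjective hψ⟩

end
end Data
end Cof

namespace Cof
open LinearMap (ker range lsmul)

section
variable {R : Type u} [CommRing R] (T : SerreClass R)
variable {X Y Z : Type u} [AddCommGroup X] [Module R X] [AddCommGroup Y] [Module R Y]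
  [AddCommGroup Z] [Module R Z]

theorem P_ker_comp (f : X →ₗ[R] Y) (g : Y →ₗ[R] Z) (hf : T.P (ker f)) (hg : T.P (ker g)) :
    T.P (ker (g ∘ₗ f)) := by
  refine T.ker_range (f ∘ₗ (ker (g ∘ₗ f)).subtype) ?_ ?_
  · refine T.of_inj ((((ker (g ∘ₗ f)).subtype ∘ₗ (ker (f ∘ₗ (ker (g ∘ₗ f)).subtype)).subtype)).codRestrict (ker f)
      (fun v => v.2)) ?_ hf
    intro v w h
    have h' : v.1.1 = w.1.1 := congrArg (ker f).subtype h
    exact Subtype.ext (Subtype.ext h')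
  · refine T.of_le ?_ hg
    rintro _ ⟨v, rfl⟩
    exact v.2

theorem P_coker_comp (f : X →ₗ[R] Y) (g : Y →ₗ[R] Z) (hf : T.P (Y ⧸ range f)) (hg : T.P (Z ⧸ range g)) :
    T.P (Z ⧸ range (g ∘ₗ f)) := by
  refine T.mid ((range f).mapQ (range (g ∘ₗ f)) g ?_)
    ((range (g ∘ₗ f)).mapQ (range g) LinearMap.id ?_) ?_ hf hg
  · rintro _ ⟨v, rfl⟩; exact ⟨v, rfl⟩
  · rintro _ ⟨v, rfl⟩; exact ⟨f v, rfl⟩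
  · intro w
    obtain ⟨w, rfl⟩ := Submodule.mkQ_surjective _ w
    constructor
    · intro h
      have h : (range g).mkQ w = 0 := h
      rw [Submodule.mkQ_apply, Submodule.Quotient.mk_eq_zero] at h
      obtain ⟨v, rfl⟩ := h
      exact ⟨Submodule.Quotient.mk v, rfl⟩
    · rintro ⟨v, hv⟩
      obtain ⟨v, rfl⟩ := Submodule.mkQ_surjective _ v
      rw [← hv]
      change (range g).mkQ (g v) = 0
      rw [Submodule.mkQ_apply, Submodule.Quotient.mk_eq_zero]
      exact ⟨v, rfl⟩

theorem P_ker_quot (q : X →ₗ[R] Y) (hq : Function.Surjective q) (h : T.P (ker q)) (x : R)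
    (hx : T.P (ker (lsmul R X x))) : T.P (ker (lsmul R Y x)) := by
  have h1 : T.P (ker (q ∘ₗ lsmul R X x)) := P_ker_comp T _ _ hx h
  refine T.of_surj ((q ∘ₗ (ker (q ∘ₗ lsmul R X x)).subtype).codRestrict _ (fun v => ?_)) ?_ h1
  · have : q (x • v.1) = 0 := v.2
    rw [map_smul] at this
    exact this
  · rintro ⟨w, hw⟩
    obtain ⟨v, rfl⟩ := hq w
    have hw : x • q v = 0 := hw
    exact ⟨⟨v, by rw [LinearMap.mem_ker]; change q (x • v) = 0; rw [map_smul, hw]⟩, rfl⟩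

theorem P_coker_quot (q : X →ₗ[R] Y) (hq : Function.Surjective q) (x : R)
    (hx : T.P (X ⧸ range (lsmul R X x))) : T.P (Y ⧸ range (lsmul R Y x)) := by
  refine T.of_surj (Submodule.mapQ _ _ q ?_) ?_ hx
  · rintro _ ⟨v, rfl⟩
    exact ⟨q v, (map_smul q x v).symm⟩
  · intro w
    obtain ⟨w, rfl⟩ := Submodule.mkQ_surjective _ w
    obtain ⟨v, rfl⟩ := hq w
    exact ⟨Submodule.Quotient.mk v, rfl⟩
end

namespace Data
section
variable {R : Type u} [CommRing R] {a : Ideal R} (K : Data R a)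
variable {M M' M'' : Type u} [AddCommGroup M] [Module R M] [AddCommGroup M'] [Module R M']
  [AddCommGroup M''] [Module R M''] (T : SerreClass R)

theorem kerE (x : R) (h1 : ∀ i, T.P (K.E i (ker (lsmul R M x))))
    (h2 : ∀ i, T.P (K.E i (M ⧸ range (lsmul R M x)))) (i : ℕ) :
    T.P (ker (lsmul R (K.E i M) x)) ∧ T.P (K.E i M ⧸ range (lsmul R (K.E i M) x)) := by
  set φ := lsmul R M x
  have hs := φ.surjective_rangeRestrict
  have hi := (ker φ).injective_subtype
  have he := exact_ker φ
  have hi' := (range φ).injective_subtype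
  have he' := LinearMap.exact_subtype_mkQ (range φ)
  have hs' := Submodule.mkQ_surjective (range φ)
  have hcomp : K.emap i (range φ).subtype ∘ₗ K.emap i φ.rangeRestrict = lsmul R (K.E i M) x := by
    refine LinearMap.ext fun e => ?_
    refine (K.emap_comp i _ _ e).trans ?_
    exact K.emap_smul i x e
  rw [← hcomp]
  constructor
  · apply P_ker_comp
    · rw [LinearMap.exact_iff.1 (K.Lex hi he hs i)]
      exact T.range _ (h1 i)
    · cases i with
      | zero => exact K.LK0 T hi' he' hs'
      | succ i => exact K.LK T hi' he' hs' (h2 i)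
  · apply P_coker_comp
    · exact K.LC T hi he hs (h1 (i+1))
    · rw [← LinearMap.exact_iff.1 (K.Lex hi' he' hs' i)]
      exact T.of_inj ((ker (K.emap i (range φ).mkQ)).liftQ _ le_rfl)
        (LinearMap.ker_eq_bot.1 (Submodule.ker_liftQ_eq_bot _ _ _ le_rfl)) (h2 i)
end

section
variable {R : Type u} [CommRing R] [IsNoetherianRing R] {a : Ideal R} (K : Data R a)
variable {M : Type u} [AddCommGroup M] [Module R M]

theorem fgMod_bot {X : Type u} [AddCommGroup X] [Module R X] :
    (fgMod (tors (⊥ : Submonoid R))).P X ↔ Module.Finite R X := by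
  constructor
  · rintro ⟨F, hF, h⟩
    have : F = ⊤ := by
      rw [eq_top_iff]
      intro v _
      obtain ⟨s, hs, h⟩ := h (Submodule.Quotient.mk v)
      rw [Submonoid.mem_bot.1 hs, one_smul, Submodule.Quotient.mk_eq_zero] at h
      exact h
    exact ⟨this ▸ hF⟩
  · intro h
    exact fgMod_of_fg _ _ h

theorem red (hM : IsTors a M) (h : ∀ i ≤ 2, Module.Finite R (K.E i M)) (x : R)
    (hd : ∀ p ∈ Module.support R M, x ∈ p.asIdeal → cd ⊥ 1 p.asIdeal) (i : ℕ) :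
    Module.Finite R (ker (lsmul R (K.E i M) x)) ∧
      Module.Finite R (K.E i M ⧸ range (lsmul R (K.E i M) x)) := by
  have hxs : ∀ (X : Type u) [AddCommGroup X] [Module R X], (∀ v : X, x • v = 0) →
      ∀ p ∈ Module.support R X, x ∈ p.asIdeal := by
    intro X _ _ hX p hp
    exact Module.annihilator_le_of_mem_support hp (Module.mem_annihilator.2 hX)
  have h1 : ∀ i, Module.Finite R (K.E i (ker (lsmul R M x))) := by
    intro i
    rw [← fgMod_bot]
    refine K.fin1 ⊥ (hM.sub _) (fun p hp _ => hd p ?_ (hxs _ ?_ p hp)) (fun i hi => ?_) i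
    · exact Module.support_subset_of_injective _ (Submodule.injective_subtype _) hp
    · intro v
      exact Subtype.ext v.2
    · rw [fgMod_bot]
      exact K.P_ker (fg R) le_rfl (fun i hi => h i (by omega)) _ i hi
  have h2 : ∀ i, Module.Finite R (K.E i (M ⧸ range (lsmul R M x))) := by
    intro i
    rw [← fgMod_bot]
    refine K.fin1 ⊥ (hM.quot _) (fun p hp _ => hd p ?_ (hxs _ ?_ p hp)) (fun i hi => ?_) i
    · exact Module.support_subset_of_surjective _ (Submodule.mkQ_surjective _) hp
    · intro v
      obtain ⟨v, rfl⟩ := Submodule.mkQ_surjective _ v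
      rw [← map_smul, Submodule.mkQ_apply, Submodule.Quotient.mk_eq_zero]
      exact ⟨v, rfl⟩
    · rw [fgMod_bot]
      exact K.P_coker (fg R) h _ h1 i (by omega)
  exact K.kerE (fg R) x h1 h2 i
end
end Data
end Cof

namespace Cof
open LinearMap (ker range lsmul)
open TensorProduct

section
variable {R : Type u} [CommRing R]

/-- the divisible part -/
theorem exists_div {Y : Type u} [AddCommGroup Y] [Module R Y] [IsNoetherianRing R] (y : R)
    (ht : ∀ v : Y, ∃ N : ℕ, y ^ N • v = 0) (h : Module.Finite R (Y ⧸ range (lsmul R Y y))) :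
    ∃ D : Submodule R Y, (∀ v ∈ D, ∃ w ∈ D, y • w = v) ∧ Module.Finite R (Y ⧸ D) := by
  obtain ⟨L, hL, hLY⟩ : ∃ L : Submodule R Y, L.FG ∧ L ⊔ range (lsmul R Y y) = ⊤ := by
    obtain ⟨s, hs⟩ := h.fg_top
    have hσ := Function.surjInv_eq (Submodule.mkQ_surjective (range (lsmul R Y y)))
    set σ := Function.surjInv (Submodule.mkQ_surjective (range (lsmul R Y y)))
    refine ⟨Submodule.span R (σ '' s), Submodule.fg_span (s.finite_toSet.image _), ?_⟩
    have : (Submodule.span R (σ '' s)).map (range (lsmul R Y y)).mkQ = ⊤ := by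
      rw [Submodule.map_span, ← hs, ← Set.image_comp]
      congr 1
      have : ((range (lsmul R Y y)).mkQ ∘ σ) = id := funext hσ
      rw [this, Set.image_id]
    have h2 := Submodule.comap_map_eq (range (lsmul R Y y)).mkQ (Submodule.span R (σ '' s))
    rw [this, Submodule.ker_mkQ, Submodule.comap_top] at h2
    exact h2.symm
  obtain ⟨s, ⟨c, rfl⟩, hc⟩ := fg_tors_single (S := Submonoid.powers y) hL (fun v _ => by
    obtain ⟨N, hN⟩ := ht v
    exact ⟨_, ⟨N, rfl⟩, hN⟩)
  have hdec : ∀ v : Y, ∃ l ∈ L, ∃ w, v = l + y • w := by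
    intro v
    obtain ⟨l, hl, _, ⟨w, rfl⟩, h⟩ := Submodule.mem_sup.1 (hLY ▸ Submodule.mem_top : v ∈ L ⊔ range (lsmul R Y y))
    exact ⟨l, hl, w, h.symm⟩
  refine ⟨range (lsmul R Y (y ^ c)), ?_, ?_⟩
  · rintro _ ⟨v, rfl⟩
    obtain ⟨l, hl, w, rfl⟩ := hdec v
    refine ⟨y ^ c • w, ⟨w, rfl⟩, ?_⟩
    change _ = y ^ c • (l + y • w)
    rw [smul_add, hc l hl, zero_add, smul_comm]
  · have : ∀ k, (fg R).P (Y ⧸ range (lsmul R Y (y ^ k))) := by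
      intro k
      induction k with
      | zero =>
        refine (fg R).zero _ ?_
        refine Submodule.Quotient.subsingleton_iff.2 (eq_top_iff.2 fun v _ => ?_)
        exact ⟨v, by simp⟩
      | succ k ih =>
        have : lsmul R Y (y ^ (k+1)) = lsmul R Y y ∘ₗ lsmul R Y (y ^ k) := by
          ext v
          change y ^ (k+1) • v = y • y ^ k • v
          rw [pow_succ', mul_smul]
        rw [this]
        exact P_coker_comp (fg R) _ _ ih h
    exact this c

theorem div_tors {D : Type u} [AddCommGroup D] [Module R D] [IsNoetherianRing R] (y : R)
    (ht : ∀ v : D, ∃ N : ℕ, y ^ N • v = 0) (hd : ∀ v : D, ∃ w, y • w = v)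
    (W : Submonoid R) (h : (fgMod (tors W)).P D) : (tors W).P D := by
  obtain ⟨F, hF, h⟩ := h
  obtain ⟨s, ⟨c, rfl⟩, hc⟩ := fg_tors_single (S := Submonoid.powers y) hF (fun v _ => by
    obtain ⟨N, hN⟩ := ht v
    exact ⟨_, ⟨N, rfl⟩, hN⟩)
  have hd' : ∀ k : ℕ, ∀ v : D, ∃ w, y ^ k • w = v := by
    intro k
    induction k with
    | zero => exact fun v => ⟨v, by simp⟩
    | succ k ih =>
      intro v
      obtain ⟨w, rfl⟩ := hd v
      obtain ⟨w, rfl⟩ := ih w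
      exact ⟨w, by rw [pow_succ', mul_smul]⟩
  intro v
  obtain ⟨w, rfl⟩ := hd' c v
  obtain ⟨s, hs, h⟩ := h (Submodule.Quotient.mk w)
  rw [← Submodule.Quotient.mk_smul, Submodule.Quotient.mk_eq_zero] at h
  exact ⟨s, hs, by rw [smul_comm]; exact hc _ h⟩

section det
variable {y : R} {R' : Type u} [CommRing R'] [Algebra R R'] 
variable {D : Type u} [AddCommGroup D] [Module R D]

theorem det_trick (hc : Compl R y R') (ht : ∀ v : D, ∃ N : ℕ, y ^ N • v = 0)
    (hd : ∀ v : D, ∃ w, y • w = v) (hG : (ker (lsmul R D y)).FG) (u : R)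
    (hu : ∀ v : D, y • v = 0 → u • v = 0) :
    ∃ z : R', (∀ v : R' ⊗[R] D, z • v = 0) ∧
      ∀ q : Ideal R', q.IsPrime → z ∈ q → algebraMap R R' y ∈ q → algebraMap R R' u ∈ q := by
  obtain ⟨m, g, hg⟩ := Submodule.fg_iff_exists_fin_generating_family.1 hG
  choose σ hσ using hd
  let δ : ℕ → Fin m → D := fun k i => σ^[k] (g i)
  have hδ0 : δ 0 = g := rfl
  have hδ : ∀ k i, y • δ (k+1) i = δ k i := by
    intro k i
    change y • σ^[k+1] (g i) = σ^[k] (g i)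
    rw [Function.iterate_succ_apply', hσ]
  have hgy : ∀ i, y • g i = 0 := by
    intro i
    have : g i ∈ ker (lsmul R D y) := by rw [← hg]; exact Submodule.subset_span ⟨i, rfl⟩
    exact this
  have hδg : ∀ k i, y ^ k • δ k i = g i := by
    intro k i
    induction k with
    | zero => simp [hδ0]
    | succ k ih => rw [pow_succ, mul_smul, hδ, ih]
  have hδy : ∀ k i, y ^ (k+1) • δ k i = 0 := by
    intro k i
    rw [pow_succ', mul_smul, hδg, hgy]
  have hGm : ∀ v : D, y • v = 0 → ∃ r : Fin m → R, ∑ j, r j • g j = v := by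
    intro v hv
    have : v ∈ Submodule.span R (Set.range g) := by rw [hg]; exact hv
    exact (Submodule.mem_span_range_iff_exists_fun R).1 this
  have hspan : ∀ k, ∀ v : D, y ^ (k+1) • v = 0 → ∃ r : Fin m → R, ∑ j, r j • δ k j = v := by
    intro k
    induction k with
    | zero => intro v hv; exact hGm v (by simpa using hv)
    | succ k ih =>
      intro v hv
      obtain ⟨r, hr⟩ := ih (y • v) (by rw [← mul_smul, ← pow_succ]; exact hv)
      obtain ⟨s, hs⟩ := hGm (v - ∑ j, r j • δ (k+1) j) (by
        rw [smul_sub, ← hr, Finset.smul_sum, sub_eq_zero]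
        refine Finset.sum_congr rfl fun j _ => ?_
        rw [smul_comm, hδ])
      refine ⟨fun j => r j + s j * y ^ (k+1), ?_⟩
      rw [eq_sub_iff_add_eq] at hs
      rw [← hs, add_comm (∑ j, s j • g j), ← Finset.sum_add_distrib]
      refine Finset.sum_congr rfl fun j _ => ?_
      rw [add_smul, mul_smul, hδg]
  -- the matrices
  let good : ℕ → Matrix (Fin m) (Fin m) R → Prop := fun N C =>
    ∀ k ≤ N, u • δ k = y • mact D C (δ k)
  have hb : ∀ N C, ∃ b : Matrix (Fin m) (Fin m) R, good N C → good (N+1) (C + y ^ N • b) := by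
    intro N C
    by_cases hgood : good N C
    swap
    · exact ⟨0, fun h => absurd h hgood⟩
    have h1 : ∀ i, ∃ r : Fin m → R, ∑ j, r j • g j = u • δ (N+1) i - y • mact D C (δ (N+1)) i := by
      intro i
      apply hGm
      have h2 := congrFun (hgood N le_rfl) i
      have h3 : y • mact D C (δ (N+1)) i = mact D C (δ N) i := by
        rw [mact_apply, mact_apply, Finset.smul_sum]
        refine Finset.sum_congr rfl fun j _ => ?_
        rw [smul_comm, hδ]
      have h2' : u • δ N i = y • mact D C (δ N) i := h2
      rw [smul_sub, h3, smul_comm, hδ, h2', sub_self]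
    choose b hb using h1
    let b : Matrix (Fin m) (Fin m) R := b
    refine ⟨b, fun _ k hk => ?_⟩
    ext i
    change u • δ k i = y • mact D (C + y ^ N • b) (δ k) i
    have hsp : mact D (C + y ^ N • b) (δ k) i = mact D C (δ k) i + y ^ N • ∑ j, b i j • δ k j := by
      simp only [mact_apply, Matrix.add_apply, Matrix.smul_apply, add_smul, Finset.sum_add_distrib,
        Finset.smul_sum, smul_assoc]
    rw [hsp, smul_add, ← mul_smul, ← pow_succ']
    rcases Nat.lt_or_ge N k with hk' | hk'
    · obtain rfl : k = N + 1 := by omega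
      rw [Finset.smul_sum]
      have : ∑ j, y ^ (N+1) • b i j • δ (N+1) j = ∑ j, b i j • g j :=
        Finset.sum_congr rfl fun j _ => by rw [smul_comm, hδg]
      rw [this, hb i]; abel
    · have h2 : u • δ k i = y • mact D C (δ k) i := congrFun (hgood k hk') i
      have : ∑ j, y ^ (N+1) • b i j • δ k j = 0 := Finset.sum_eq_zero fun j _ => by
        obtain ⟨e, rfl⟩ := Nat.exists_eq_add_of_le hk'
        rw [smul_comm, show k + e + 1 = e + (k + 1) by ring, pow_add, mul_smul, hδy, smul_zero, smul_zero]
      rw [Finset.smul_sum, this, add_zero, h2]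
  choose b hb using hb
  let Cs : ℕ → Matrix (Fin m) (Fin m) R := fun N => Nat.rec 0 (fun N C => C + y ^ N • b N C) N
  have hCs : ∀ N, Cs (N+1) = Cs N + y ^ N • b N (Cs N) := fun _ => rfl
  have hgood : ∀ N, good N (Cs N) := by
    intro N
    induction N with
    | zero =>
      intro k hk
      obtain rfl : k = 0 := by omega
      ext i
      change u • g i = y • mact D 0 g i
      rw [hu _ (hgy i), mact_zero]; simp
    | succ N ih => rw [hCs]; exact hb N _ ih
  have hsum : ∀ N i j, Cs N i j = ∑ k ∈ Finset.range N, b k (Cs k) i j * y ^ k := by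
    intro N i j
    induction N with
    | zero => rfl
    | succ N ih =>
      rw [hCs, Finset.sum_range_succ, ← ih, Matrix.add_apply, Matrix.smul_apply, smul_eq_mul, mul_comm]
  choose c' hc' using fun i j => hc.lim (fun k => b k (Cs k) i j)
  let A : Matrix (Fin m) (Fin m) R' := algebraMap R R' u • 1 - algebraMap R R' y • Matrix.of c'
  have hA : ∀ k, mact (R' ⊗[R] D) A (fun j => (1 : R') ⊗ₜ[R] δ k j) = 0 := by
    intro k
    ext i
    have e1 : mact (R' ⊗[R] D) A (fun j => (1 : R') ⊗ₜ[R] δ k j) i =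
        algebraMap R R' u • ((1 : R') ⊗ₜ[R] δ k i) - ∑ j, (algebraMap R R' y * c' i j) • ((1 : R') ⊗ₜ[R] δ k j) := by
      simp only [mact_apply, A, Matrix.sub_apply, Matrix.smul_apply, sub_smul, Finset.sum_sub_distrib,
        Matrix.of_apply, smul_eq_mul]
      congr 1
      simp [Matrix.one_apply]
    have e2 : ∀ j, (algebraMap R R' y * c' i j) • ((1 : R') ⊗ₜ[R] δ k j) =
        (1 : R') ⊗ₜ[R] (y • Cs k i j • δ k j) := by
      intro j
      obtain ⟨t, ht⟩ := hc' i j k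
      rw [ht, ← hsum, mul_add, add_smul, ← map_mul, algebraMap_smul, ← tmul_smul, mul_smul]
      have : algebraMap R R' y * (algebraMap R R' y ^ k * t) = t * algebraMap R R' (y ^ (k+1)) := by
        rw [map_pow]; ring
      rw [this, mul_smul, algebraMap_smul, ← tmul_smul, hδy, tmul_zero, smul_zero, add_zero]
    rw [e1, Finset.sum_congr rfl (fun j _ => e2 j), ← tmul_sum, algebraMap_smul, ← tmul_smul]
    have h2 : u • δ k i = y • mact D (Cs k) (δ k) i := congrFun (hgood k k le_rfl) i
    rw [h2, mact_apply, Finset.smul_sum, sub_self]; rfl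
  refine ⟨A.det, ?_, ?_⟩
  · have h1 : ∀ k i, A.det • ((1 : R') ⊗ₜ[R] δ k i) = 0 := by
      intro k i
      have := congrFun (mact_smul_one (M := R' ⊗[R] D) A.det (fun j => (1 : R') ⊗ₜ[R] δ k j)) i
      rw [← Matrix.adjugate_mul, mact_mul, hA, map_zero] at this
      exact this.symm
    intro v
    induction v with
    | zero => simp
    | add v w hv hw => rw [smul_add, hv, hw, add_zero]
    | tmul r v =>
      obtain ⟨N, hN⟩ := ht v
      obtain ⟨s, rfl⟩ := hspan N v (by rw [pow_succ', mul_smul, hN, smul_zero])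
      rw [tmul_sum, Finset.smul_sum]
      refine Finset.sum_eq_zero fun j _ => ?_
      have : r ⊗ₜ[R] (s j • δ N j) = (r * algebraMap R R' (s j)) • ((1 : R') ⊗ₜ[R] δ N j) := by
        rw [mul_smul, algebraMap_smul, ← tmul_smul, smul_tmul', smul_eq_mul, mul_one]
      rw [this, smul_comm, h1, smul_zero]
  · intro q hq hz hy
    rw [← Ideal.Quotient.eq_zero_iff_mem] at *
    rw [RingHom.map_det] at hz
    have : (Ideal.Quotient.mk q).mapMatrix A = Ideal.Quotient.mk q (algebraMap R R' u) • 1 := by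
      ext i j
      simp only [A, RingHom.mapMatrix_apply, Matrix.map_apply, Matrix.sub_apply, Matrix.smul_apply,
        map_sub, smul_eq_mul, map_mul, hy, zero_mul, sub_zero]
      by_cases h : i = j
      · subst h; simp
      · simp [h]
    rw [this, Matrix.det_smul, Matrix.det_one, mul_one] at hz
    exact IsReduced.eq_zero _ ⟨_, hz⟩
end det
end
end Cof

namespace Cof
open LinearMap (ker range lsmul)
open TensorProduct

section
variable {R : Type u} [CommRing R]

theorem disj_bot (q : Ideal R) (hq : q.IsPrime) : Disjoint (q : Set R) ((⊥ : Submonoid R) : Set R) := by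
  rw [Set.disjoint_left]
  intro x hx h
  rw [Submonoid.mem_bot.1 h] at hx
  exact hq.ne_top ((Ideal.eq_top_iff_one q).2 hx)

variable {y : R} {R' : Type u} [CommRing R'] [Algebra R R'] 

theorem zero_of_tensor (hc : Compl R y R') {D : Type u} [AddCommGroup D] [Module R D]
    (ht : ∀ v : D, ∃ N : ℕ, y ^ N • v = 0) (h : Subsingleton (R' ⊗[R] D)) : Subsingleton D := by
  have := hc.flat
  have key : ∀ v : D, y • v = 0 → v = 0 := by
    intro v hv
    let φ : R →ₗ[R] D := LinearMap.toSpanSingleton R D v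
    have hex : Function.Exact (ker φ).subtype φ := LinearMap.exact_subtype_ker_map _
    obtain ⟨t, ht⟩ := (Module.Flat.lTensor_exact R' hex ((1 : R') ⊗ₜ (1 : R))).1 (Subsingleton.elim _ _)
    have h1 : ∀ t : R' ⊗[R] ker φ, ∃ (j : ker φ) (t' : R'),
        TensorProduct.rid R R' ((ker φ).subtype.lTensor R' t) = algebraMap R R' j.1 + algebraMap R R' y * t' := by
      intro t
      induction t with
      | zero => exact ⟨0, 0, by simp⟩
      | add s t hs ht =>
        obtain ⟨j, s', hs⟩ := hs
        obtain ⟨k, t', ht⟩ := ht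
        refine ⟨j + k, s' + t', ?_⟩
        rw [map_add, map_add, hs, ht, Submodule.coe_add, map_add]; ring
      | tmul r j =>
        obtain ⟨r0, t0, rfl⟩ := hc.surj r
        refine ⟨r0 • j, t0 * algebraMap R R' j.1, ?_⟩
        rw [LinearMap.lTensor_tmul, TensorProduct.rid_tmul, Algebra.smul_def, Submodule.coe_smul, smul_eq_mul, map_mul]
        simp only [Submodule.subtype_apply]
        ring
    obtain ⟨j, t', h2⟩ := h1 t
    rw [ht, TensorProduct.rid_tmul, one_smul] at h2
    obtain ⟨s, hs⟩ := hc.inj (1 - j.1) t' (by rw [map_sub, map_one]; nth_rewrite 1 [h2]; ring)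
    have hj : j.1 • v = 0 := j.2
    have : (1 : R) • v = (1 - j.1) • v + j.1 • v := by rw [← add_smul]; congr 1; ring
    rw [one_smul, hs, hj, mul_comm, mul_smul, hv, smul_zero, add_zero] at this
    exact this
  have key2 : ∀ N : ℕ, ∀ v : D, y ^ N • v = 0 → v = 0 := by
    intro N
    induction N with
    | zero => intro v hv; simpa using hv
    | succ N ih =>
      intro v hv
      rw [pow_succ', mul_smul] at hv
      exact ih v (key _ hv)
  refine subsingleton_of_forall_eq 0 fun v => ?_
  obtain ⟨N, hN⟩ := ht v
  exact key2 N v hN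

theorem cd_compl (hc : Compl R y R') (I : Ideal R) (u : R) (z : R')
    (hmax : ∀ q : Ideal R, q.IsPrime → I ≤ q → y ∈ q → u ∈ q → q.IsMaximal)
    (hz : ∀ q : Ideal R', q.IsPrime → z ∈ q → algebraMap R R' y ∈ q → algebraMap R R' u ∈ q)
    (p : Ideal R') (hp : p.IsPrime) (hIp : I ≤ p.comap (algebraMap R R')) (hzp : z ∈ p) :
    cd ⊥ 1 p := by
  have := hc.noeth
  intro q hq hpq _ q' hq' hqq' _
  obtain ⟨m, hm, hqm⟩ := Ideal.exists_le_maximal q' hq'.ne_top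
  have hmp := hm.isPrime
  have hym := hc.jac m hm
  have hpm : p < m := hpq.trans (hqq'.trans_le hqm)
  have hmin : m ∈ (p ⊔ Ideal.span {algebraMap R R' y}).minimalPrimes := by
    refine ⟨⟨hmp, ?_⟩, ?_⟩
    · rw [sup_le_iff, Ideal.span_singleton_le_iff_mem]
      exact ⟨hpm.le, hym⟩
    · rintro q'' ⟨hq'', hle⟩ hqm''
      rw [sup_le_iff, Ideal.span_singleton_le_iff_mem] at hle
      have hu := hz q'' hq'' (hle.1 hzp) hle.2
      have hcm : (q''.comap (algebraMap R R')).IsMaximal :=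
        hmax _ (hq''.comap _) (hIp.trans (Ideal.comap_mono hle.1)) hle.2 hu
      have heq : q''.comap (algebraMap R R') = m.comap (algebraMap R R') :=
        hcm.eq_of_le (hmp.comap _).ne_top (Ideal.comap_mono hqm'')
      intro x hx
      obtain ⟨r, t, rfl⟩ := hc.surj x
      have hr : r ∈ m.comap (algebraMap R R') := by
        have := m.sub_mem hx (m.mul_mem_right t hym)
        rwa [add_sub_cancel_right] at this
      rw [← heq] at hr
      exact q''.add_mem hr (q''.mul_mem_right t hle.2)
  have hh := Ideal.map_height_le_one_of_mem_minimalPrimes hmin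
  let f := Ideal.Quotient.mk p
  have hker : ∀ r : Ideal R', p ≤ r → RingHom.ker f ≤ r := fun r hr => by rw [Ideal.mk_ker]; exact hr
  have hfs : Function.Surjective f := Ideal.Quotient.mk_surjective
  have hmP : (m.map f).IsPrime := Ideal.map_isPrime_of_surjective hfs (hker _ hpm.le)
  have hqP : (q.map f).IsPrime := Ideal.map_isPrime_of_surjective hfs (hker _ hpq.le)
  have hpP : (p.map f).IsPrime := Ideal.map_isPrime_of_surjective hfs (hker _ le_rfl)
  have hlt : ∀ r s : Ideal R', p ≤ r → r < s → r.map f < s.map f := by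
    intro r s hpr hrs
    refine lt_of_le_of_ne (Ideal.map_mono hrs.le) fun h => hrs.ne ?_
    have h1 := Ideal.comap_map_of_surjective' f hfs r
    have h2 := Ideal.comap_map_of_surjective' f hfs s
    rw [sup_eq_left.2 (hker r hpr)] at h1
    rw [sup_eq_left.2 (hker s (hpr.trans hrs.le))] at h2
    rw [← h1, ← h2, h]
  have hq0 : (q.map f).height < 1 := Ideal.height_le_iff.1 hh _ hqP (hlt q m hpq.le (hqq'.trans_le hqm))
  have hp0 : (p.map f).height < 0 :=
    Ideal.height_le_iff.1 (Order.lt_one_iff_nonpos.1 hq0) _ hpP (hlt p q le_rfl hpq)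
  exact absurd hp0 (by simp)

theorem isTors_bc {a : Ideal R} {M : Type u} [AddCommGroup M] [Module R M] (hM : IsTors a M) :
    IsTors (a.map (algebraMap R R')) (R' ⊗[R] M) := by
  intro x hx v
  have : a.map (algebraMap R R') ≤ (Submodule.annihilator (Submodule.span R' {v})).radical := by
    rw [Ideal.map_le_iff_le_comap]
    intro x hx
    have : ∃ N : ℕ, algebraMap R R' x ^ N • v = 0 := by
      induction v with
      | zero => exact ⟨0, by simp⟩
      | add v w hv hw =>
        obtain ⟨N, hv⟩ := hv
        obtain ⟨N', hw⟩ := hw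
        exact ⟨N + N', by rw [smul_add, pow_add, mul_smul, mul_smul, hw, smul_comm, hv]; simp⟩
      | tmul r v =>
        obtain ⟨N, hN⟩ := hM x ‹_› v
        exact ⟨N, by rw [← map_pow, algebraMap_smul, ← tmul_smul, hN, tmul_zero]⟩
    obtain ⟨N, hN⟩ := this
    exact ⟨N, Submodule.mem_annihilator_span_singleton _ _ |>.2 hN⟩
  obtain ⟨N, hN⟩ := this hx
  exact ⟨N, (Submodule.mem_annihilator_span_singleton _ _).1 hN⟩

theorem supp_bc {M : Type u} [AddCommGroup M] [Module R M] (p : PrimeSpectrum R')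
    (hp : p ∈ Module.support R' (R' ⊗[R] M)) :
    PrimeSpectrum.comap (algebraMap R R') p ∈ Module.support R M := by
  by_contra h
  rw [Module.notMem_support_iff'] at h
  refine (Module.notMem_support_iff'.2 ?_) hp
  intro v
  induction v with
  | zero => exact ⟨1, fun h => p.2.ne_top ((Ideal.eq_top_iff_one _).2 h), by simp⟩
  | add v w hv hw =>
    obtain ⟨r, hr, hv⟩ := hv
    obtain ⟨s, hs, hw⟩ := hw
    exact ⟨r * s, fun h => (p.2.mem_or_mem h).elim hr hs, by
      rw [smul_add, mul_smul, mul_smul, hw, smul_comm, hv]; simp⟩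
  | tmul r v =>
    obtain ⟨s, hs, hv⟩ := h v
    exact ⟨algebraMap R R' s, hs, by rw [algebraMap_smul, ← tmul_smul, hv, tmul_zero]⟩
end
end Cof

namespace Cof
open LinearMap (ker range lsmul)
open TensorProduct

section
variable {R : Type u} [CommRing R] [IsNoetherianRing R]

/-- last part of the argument, over the completion -/
theorem Data.fin2_aux {a : Ideal R} (K : Data R a) {M : Type u} [AddCommGroup M] [Module R M]
    (hM : IsTors a M) (h : ∀ i ≤ 2, Module.Finite R (K.E i M)) (i : ℕ)
    (I : Ideal R) (hI : ∀ p ∈ Module.support R M, I ≤ p.asIdeal)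
    (y u : R) (hmax : ∀ q : Ideal R, q.IsPrime → I ≤ q → y ∈ q → u ∈ q → q.IsMaximal)
    (X' : Submodule R (K.E i M)) (hX' : X'.FG) (D : Submodule R (K.E i M ⧸ X'))
    (ht : ∀ v : D, ∃ N : ℕ, y ^ N • v = 0) (hd : ∀ v : D, ∃ w : D, y • w = v)
    (hG : (ker (lsmul R D y)).FG) (hu : ∀ v : D, y • v = 0 → u • v = 0) : Subsingleton D := by
  let R' := AdicCompletion (Ideal.span {y} : Ideal R) R
  have hc : Compl R y R' := exists_compl y
  have := hc.flat
  have := hc.noeth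
  obtain ⟨z, hz0, hz⟩ := det_trick hc ht hd hG u hu
  refine zero_of_tensor hc ht ?_
  have hfin : Module.Finite R' (ker (lsmul R' ((K.bc R').E i (R' ⊗[R] M)) z)) := by
    refine ((K.bc R').red (isTors_bc hM) (fun j hj => ?_) z (fun p hp hzp => ?_) i).1
    · obtain ⟨e⟩ := K.ebc R' M j
      have := h j hj
      exact Module.Finite.equiv e
    · exact cd_compl hc I u z hmax hz p.asIdeal p.2 (hI _ (supp_bc p hp)) hzp
  obtain ⟨e⟩ := K.ebc R' M i
  have hfin2 : (fg R').P (ker (lsmul R' (R' ⊗[R] K.E i M) z)) := by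
    refine (fg R').of_inj ((e.toLinearMap ∘ₗ (ker (lsmul R' (R' ⊗[R] K.E i M) z)).subtype).codRestrict
      (ker (lsmul R' ((K.bc R').E i (R' ⊗[R] M)) z)) (fun v => ?_)) ?_ hfin
    · have h1 : z • v.1 = 0 := v.2
      change z • e v.1 = 0
      rw [← map_smul, h1, map_zero]
    · intro v w hvw
      exact Subtype.ext (e.injective (congrArg (Submodule.subtype _) hvw))
  have hfin3 : (fg R').P (ker (lsmul R' (R' ⊗[R] (K.E i M ⧸ X')) z)) := by
    have hX : Module.Finite R X' := Module.Finite.iff_fg.2 hX'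
    refine P_ker_quot (fg R') (X'.mkQ.baseChange R')
      (LinearMap.lTensor_surjective R' (Submodule.mkQ_surjective _)) ?_ z hfin2
    have hle : ker (X'.mkQ.baseChange R') ≤ range (X'.subtype.baseChange R') := by
      intro t ht
      obtain ⟨s, hs⟩ := (Module.Flat.lTensor_exact R' (LinearMap.exact_subtype_mkQ X') t).1 ht
      exact ⟨s, hs⟩
    refine (fg R').of_le hle ((fg R').range _ ?_)
    change Module.Finite R' (R' ⊗[R] X')
    infer_instance
  have hfin4 : (fg R').P (R' ⊗[R] D) := by
    refine (fg R').of_inj ((D.subtype.baseChange R').codRestrict _ (fun v => ?_)) ?_ hfin3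
    · change z • (D.subtype.baseChange R') v = 0
      rw [← map_smul, hz0, map_zero]
    · intro v w hvw
      refine Module.Flat.lTensor_preserves_injective_linearMap (M := R') D.subtype D.injective_subtype ?_
      exact congrArg (Submodule.subtype _) hvw
  have htors := div_tors (D := R' ⊗[R] D) (algebraMap R R' y) (fun v => ?_) (fun v => ?_) ⊥
    (Data.fgMod_bot.2 hfin4)
  · refine subsingleton_of_forall_eq 0 fun v => ?_
    obtain ⟨s, hs, h⟩ := htors v
    rwa [Submonoid.mem_bot.1 hs, one_smul] at h
  · have hT : IsTors (Ideal.span {y}) D := by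
      intro x hx v
      obtain ⟨r, rfl⟩ := Ideal.mem_span_singleton'.1 hx
      obtain ⟨N, hN⟩ := ht v
      exact ⟨N, by rw [mul_pow, mul_smul, hN, smul_zero]⟩
    exact isTors_bc (R' := R') hT _ (Ideal.mem_map_of_mem _ (Ideal.mem_span_singleton_self y)) v
  · induction v with
    | zero => exact ⟨0, by simp⟩
    | add v w hv hw =>
      obtain ⟨v', rfl⟩ := hv
      obtain ⟨w', rfl⟩ := hw
      exact ⟨v' + w', smul_add _ _ _⟩
    | tmul r v =>
      obtain ⟨w, rfl⟩ := hd v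
      exact ⟨r ⊗ₜ w, by rw [algebraMap_smul, ← tmul_smul]⟩

theorem Data.fin2 {a : Ideal R} (K : Data R a) {M : Type u} [AddCommGroup M] [Module R M]
    (hM : IsTors a M) (hd : ∀ p ∈ Module.support R M, cd ⊥ 2 p.asIdeal)
    (h : ∀ i ≤ 2, Module.Finite R (K.E i M)) (i : ℕ) : Module.Finite R (K.E i M) := by
  have ha : a.FG := IsNoetherian.noetherian a
  have h0 : Module.Finite R (Submodule.torsionBySet R M a) := (K.P_E0 (fg R)).1 (h 0 (Nat.zero_le _))
  obtain ⟨y, hy, X', hX', hXt⟩ := K.generic hM (fun i hi => h i (by omega)) i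
  set I := Module.annihilator R (Submodule.torsionBySet R M a) with hIdef
  have hI : ∀ p ∈ Module.support R M, I ≤ p.asIdeal := by
    intro p hp
    have h1 : (tors (⊥ : Submonoid R)).P (_ ⧸ (⊤ : Submodule R (Submodule.torsionBySet R M a))) :=
      (tors _).zero _ inferInstance
    have h2 := ann_le_of_support ha hM ⊤ h1 hp (disj_bot _ p.2)
    rwa [LinearEquiv.annihilator_eq Submodule.topEquiv] at h2
  have hI' : ∀ p : Ideal R, p.IsPrime → I ≤ p → cd ⊥ 2 p := by
    intro p hp hIp
    exact hd ⟨p, hp⟩ (mem_support_of_ann_le _ (Module.Finite.iff_fg.1 h0) hIp)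
  -- primes over `I + (y)` have dimension at most one
  have hcd1 : ∀ p : Ideal R, p.IsPrime → I ≤ p → y ∈ p → cd ⊥ 1 p := by
    intro p hp hIp hyp
    obtain ⟨p0, hp0, hle⟩ := Ideal.exists_minimalPrimes_le hIp
    have hne : p0 ≠ p := by
      rintro rfl
      exact hy p0 hp0 (disj_bot _ hp) hyp
    exact hI' p0 hp0.1.1 hp0.1.2 p hp (lt_of_le_of_ne hle hne) (disj_bot _ hp)
  obtain ⟨hker, hcok⟩ := K.red hM h y (fun p hp hyp => hcd1 _ p.2 (hI p hp) hyp) i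
  -- the quotient `Y = X / X'`
  have hkY : (fg R).P (ker (lsmul R (K.E i M ⧸ X') y)) :=
    P_ker_quot (fg R) X'.mkQ (Submodule.mkQ_surjective _) (by
      rw [Submodule.ker_mkQ]; exact Module.Finite.iff_fg.2 hX') y hker
  have hcY : (fg R).P ((K.E i M ⧸ X') ⧸ range (lsmul R (K.E i M ⧸ X') y)) :=
    P_coker_quot (fg R) X'.mkQ (Submodule.mkQ_surjective _) y hcok
  have hYt : ∀ v : K.E i M ⧸ X', ∃ N : ℕ, y ^ N • v = 0 := by
    intro v
    obtain ⟨s, ⟨N, rfl⟩, hs⟩ := hXt v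
    exact ⟨N, hs⟩
  obtain ⟨D, hDdiv, hDfin⟩ := exists_div y hYt hcY
  have hDt : ∀ v : D, ∃ N : ℕ, y ^ N • v = 0 := by
    intro v
    obtain ⟨N, hN⟩ := hYt v
    exact ⟨N, Subtype.ext hN⟩
  have hDd : ∀ v : D, ∃ w : D, y • w = v := by
    intro v
    obtain ⟨w, hw, h⟩ := hDdiv v v.2
    exact ⟨⟨w, hw⟩, Subtype.ext h⟩
  have hG' : (fg R).P (ker (lsmul R D y)) := by
    refine (fg R).of_inj (X := ker (lsmul R D y)) (Y := ker (lsmul R (K.E i M ⧸ X') y)) ((D.subtype ∘ₗ (ker (lsmul R D y)).subtype).codRestrict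
      (ker (lsmul R (K.E i M ⧸ X') y)) (fun v => ?_)) ?_ hkY
    · have h1 : y • v.1 = 0 := v.2
      exact congrArg D.subtype h1
    · intro v w hvw
      have h2 : (v.1.1 : K.E i M ⧸ X') = w.1.1 := congrArg (fun z => z.1) hvw
      exact Subtype.ext (Subtype.ext h2)
  have hG : (ker (lsmul R D y)).FG := Module.Finite.iff_fg.1 hG'
  have hP : ∀ P : Ideal R, P.IsPrime → I ≤ P → y ∈ P → ¬ P.IsMaximal →
      ∃ s ∉ P, ∀ v ∈ ker (lsmul R D y), s • v = 0 := by
    intro P hPp hIP hyP hPm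
    have hloc : (fgMod (tors P.primeCompl)).P (K.E i M) := by
      refine K.fin1 P.primeCompl hM (fun p hp hpP => ?_) (fun j hj => fgMod_of_fg _ _ (h j (by omega))) i
      intro q hq hpq hqP q' hq' hqq' hq'P
      have hq'P' : q' ≤ P := by
        intro x hx
        by_contra hxP
        exact Set.disjoint_left.1 hq'P hx hxP
      obtain ⟨m, hm, hPmax⟩ := Ideal.exists_le_maximal P hPp.ne_top
      have hPm' : P < m := lt_of_le_of_ne hPmax (fun h => hPm (h ▸ hm))
      exact hd p hp q hq hpq (disj_bot _ hq) q' hq' hqq' (disj_bot _ hq') m hm.isPrime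
        (hq'P'.trans_lt hPm') (disj_bot _ hm.isPrime)
    have hDloc : (tors P.primeCompl).P D :=
      div_tors y hDt hDd _ ((fgMod _).sub D ((fgMod _).quot X' hloc))
    obtain ⟨s, hs, h⟩ := fg_tors_single (S := P.primeCompl) hG (fun v _ => hDloc v)
    exact ⟨s, hs, h⟩
  -- prime avoidance
  have hu : ∃ u : R, (∀ v : D, y • v = 0 → u • v = 0) ∧
      ∀ P ∈ (I ⊔ Ideal.span {y}).minimalPrimes, ¬ P.IsMaximal → u ∉ P := by
    by_contra hcon
    push Not at hcon
    let J : Ideal R := Submodule.annihilator (ker (lsmul R D y))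
    have hfin : {P ∈ (I ⊔ Ideal.span {y}).minimalPrimes | ¬ P.IsMaximal}.Finite :=
      (Ideal.finite_minimalPrimes_of_isNoetherianRing R _).subset (Set.sep_subset _ _)
    have hsub : (J : Set R) ⊆ ⋃ p ∈ hfin.toFinset, ((p : Ideal R) : Set R) := by
      intro s hs
      obtain ⟨P, hP, hPm, hsP⟩ := hcon s (fun v hv => Submodule.mem_annihilator.1 hs v hv)
      simp only [Set.mem_iUnion]
      exact ⟨P, hfin.mem_toFinset.2 ⟨hP, hPm⟩, hsP⟩
    obtain ⟨P, hPmem, hJP⟩ := (Ideal.subset_union_prime (s := hfin.toFinset) (f := fun p => p) ⊤ ⊤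
      (fun p hp _ _ => ((hfin.mem_toFinset.1 hp).1).1.1)).1 hsub
    obtain ⟨hP1, hPm⟩ := hfin.mem_toFinset.1 hPmem
    obtain ⟨s, hs, h⟩ := hP P hP1.1.1 (le_sup_left.trans hP1.1.2)
      (hP1.1.2 (Ideal.mem_sup_right (Ideal.mem_span_singleton_self y))) hPm
    exact hs (hJP (Submodule.mem_annihilator.2 h))
  obtain ⟨u, hu, huP⟩ := hu
  have hDs : Subsingleton D := by
    refine K.fin2_aux hM h i I hI y u ?_ X' hX' D hDt hDd hG hu
    intro q hq hIq hyq huq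
    have hle : I ⊔ Ideal.span {y} ≤ q := by
      rw [sup_le_iff, Ideal.span_singleton_le_iff_mem]; exact ⟨hIq, hyq⟩
    obtain ⟨P, hPmin, hPq⟩ := Ideal.exists_minimalPrimes_le hle
    have hyP : y ∈ P := hPmin.1.2 (Ideal.mem_sup_right (Ideal.mem_span_singleton_self y))
    by_cases hPm : P.IsMaximal
    · rwa [← hPm.eq_of_le hq.ne_top hPq]
    · have hlt : P < q := lt_of_le_of_ne hPq (by rintro rfl; exact huP P hPmin hPm huq)
      have hcd := hcd1 P hPmin.1.1 (le_sup_left.trans hPmin.1.2) hyP q hq hlt (disj_bot _ hq)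
      obtain ⟨m, hm, hqm⟩ := Ideal.exists_le_maximal q hq.ne_top
      by_contra hqmax
      exact hcd m hm.isPrime (lt_of_le_of_ne hqm (fun h => hqmax (h ▸ hm))) (disj_bot _ hm.isPrime)
  refine (fg R).ext X' (Module.Finite.iff_fg.2 hX') ((fg R).ext D ((fg R).zero _ hDs) hDfin)
end
end Cof

namespace Cof
section
variable {R : Type u} [CommRing R] [IsNoetherianRing R]
open Matrix

theorem exists_rows {m : ℕ} (N : Submodule R (Fin m → R)) :
    ∃ (k : ℕ) (B : Matrix (Fin k) (Fin m) R), (∀ v, v ∈ N ↔ ∃ w, w ᵥ* B = v) := by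
  obtain ⟨k, s, hs⟩ := Submodule.fg_iff_exists_fin_generating_family.1 (IsNoetherian.noetherian N)
  refine ⟨k, Matrix.of s, fun v => ?_⟩
  rw [← hs, Submodule.mem_span_range_iff_exists_fun]
  constructor
  · rintro ⟨c, rfl⟩
    exact ⟨c, by ext j; simp [Matrix.vecMul, dotProduct, Finset.sum_apply]⟩
  · rintro ⟨c, rfl⟩
    exact ⟨c, by ext j; simp [Matrix.vecMul, dotProduct, Finset.sum_apply]⟩

noncomputable def stepk {n m : ℕ} (A : Matrix (Fin m) (Fin n) R) : ℕ :=
  (exists_rows (LinearMap.ker A.vecMulLinear)).choose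

noncomputable def stepB {n m : ℕ} (A : Matrix (Fin m) (Fin n) R) : Matrix (Fin (stepk A)) (Fin m) R :=
  (exists_rows (LinearMap.ker A.vecMulLinear)).choose_spec.choose

theorem stepB_spec {n m : ℕ} (A : Matrix (Fin m) (Fin n) R) (v : Fin m → R) :
    v ᵥ* A = 0 ↔ ∃ w, w ᵥ* stepB A = v :=
  (exists_rows (LinearMap.ker A.vecMulLinear)).choose_spec.choose_spec v

structure Mat (R : Type u) where
  n : ℕ
  m : ℕ
  A : Matrix (Fin m) (Fin n) R

noncomputable def matSeq (X : Mat R) : ℕ → Mat R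
  | 0 => X
  | j+1 => ⟨(matSeq X j).m, stepk (matSeq X j).A, stepB (matSeq X j).A⟩

/-- lifting matrices along exactness -/
theorem lift_mat {k l n : ℕ} (B : Matrix (Fin k) (Fin n) R) (C : Matrix (Fin l) (Fin n) R)
    (h : ∀ i, ∃ w, w ᵥ* B = C i) : ∃ s : Matrix (Fin l) (Fin k) R, s * B = C := by
  choose s hs using h
  exact ⟨Matrix.of s, by ext i j; exact congrFun (hs i) j⟩

theorem exists_data (a : Ideal R) : ∃ K : Data R a,
    (∀ v : Fin (K.n 0) → R, (∑ k, v k) ∈ a → ∃ w, w ᵥ* K.A 0 = v) ∧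
    (∀ j v, v ᵥ* K.A j = 0 → ∃ w, w ᵥ* K.A (j+1) = v) := by
  obtain ⟨k, B, hB⟩ := exists_rows (Submodule.pi Set.univ (fun _ : Fin 1 => (a : Submodule R R)))
  let X : Mat R := ⟨1, k, B⟩
  let n : ℕ → ℕ := fun j => (matSeq X j).n
  let A : ∀ j, Matrix (Fin (n (j+1))) (Fin (n j)) R := fun j => (matSeq X j).A
  have h0 : ∀ v : Fin (n 0) → R, (∀ i, v i ∈ a) ↔ ∃ w, w ᵥ* A 0 = v := by
    intro v
    exact Iff.trans ⟨fun h i _ => h i, fun h i => h i trivial⟩ (hB v)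
  have hA : ∀ j (v : Fin (n (j+1)) → R), v ᵥ* A j = 0 ↔ ∃ w, w ᵥ* A (j+1) = v := 
    fun j v => stepB_spec _ v
  have hrow : ∀ j i, A j i = Pi.single i 1 ᵥ* A j := by
    intro j i
    rw [Matrix.single_one_vecMul]; rfl
  have hcomp : ∀ j, A (j+1) * A j = 0 := by
    intro j
    ext i l
    have := (hA j (A (j+1) i)).2 ⟨_, (hrow _ i).symm⟩
    exact congrFun this l
  have hmem : ∀ k l, A 0 k l ∈ a := fun k l => (h0 _).2 ⟨_, (hrow 0 k).symm⟩ l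
  refine ⟨⟨n, Nat.one_pos, A, hcomp, hmem, ?_⟩, ?_, fun j v => (hA j v).1⟩
  · intro x hx
    obtain ⟨s0, hs0⟩ := lift_mat (A 0) (x • (1 : Matrix (Fin (n 0)) (Fin (n 0)) R)) (fun i => (h0 _).1 (fun l => by
      rw [Matrix.smul_apply]; exact Ideal.mul_mem_right _ _ hx))
    have hnext : ∀ j (s : Matrix (Fin (n j)) (Fin (n (j+1))) R), A j * (s * A j) = x • A j →
        ∃ s' : Matrix (Fin (n (j+1))) (Fin (n (j+1+1))) R, s' * A (j+1) = x • 1 - A j * s ∧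
          A (j+1) * (s' * A (j+1)) = x • A (j+1) := by
      intro j s hs
      obtain ⟨s', hs'⟩ := lift_mat (A (j+1)) (x • (1 : Matrix (Fin (n (j+1))) (Fin (n (j+1))) R) - A j * s) (fun i => by
        rw [← hA]
        have : (x • (1 : Matrix (Fin (n (j+1))) (Fin (n (j+1))) R) - A j * s) * A j = 0 := by
          rw [Matrix.sub_mul, Matrix.mul_assoc, hs, Matrix.smul_mul, Matrix.one_mul, sub_self]
        exact congrFun this i)
      refine ⟨s', hs', ?_⟩
      rw [hs', Matrix.mul_sub, ← Matrix.mul_assoc, hcomp, Matrix.zero_mul, sub_zero, Matrix.mul_smul, Matrix.mul_one]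
    choose nx hnx using hnext
    let S : ∀ j, {s : Matrix (Fin (n j)) (Fin (n (j+1))) R // A j * (s * A j) = x • A j} :=
      fun j => Nat.rec ⟨s0, by rw [hs0, Matrix.mul_smul, Matrix.mul_one]⟩
        (fun j s => ⟨nx j s.1 s.2, (hnx j s.1 s.2).2⟩) j
    refine ⟨fun j => (S j).1, hs0, fun j => ?_⟩
    have := (hnx j (S j).1 (S j).2).1
    exact eq_sub_iff_add_eq.1 this
  · intro v hv
    refine (h0 v).1 (fun i => ?_)
    have hs : ∀ (v : Fin 1 → R) (i : Fin 1), ∑ k : Fin 1, v k = v i := by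
      intro v i
      rw [Fin.sum_univ_one]; congr 1; exact (Subsingleton.elim (0 : Fin 1) i)
    have this : _ = v i := hs v i
    exact this ▸ hv
end
end Cof

namespace Cof
section
variable {R : Type u} [CommRing R] 
open Matrix

theorem finite_homology_iff (S : ShortComplex (ModuleCat.{u} R)) {C : Type u} [AddCommGroup C] [Module R C]
    (e : S.X₂ ≃ₗ[R] C) (Z B : Submodule R C)
    (hZ : ∀ x, S.g.hom x = 0 ↔ e x ∈ Z) (hB : ∀ x, (∃ y, S.f.hom y = x) ↔ e x ∈ B) :
    Module.Finite R S.homology ↔ Module.Finite R (Z ⧸ B.comap Z.subtype) := by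
  have e1 : S.homology ≃ₗ[R] (LinearMap.ker S.g.hom ⧸ LinearMap.range S.moduleCatToCycles) :=
    S.moduleCatHomologyIso.toLinearEquiv
  let e2 : (LinearMap.ker S.g.hom) ≃ₗ[R] Z := e.submoduleMap _ |>.trans
    (LinearEquiv.ofEq _ _ (by
      ext c
      constructor
      · rintro ⟨x, hx, rfl⟩
        exact (hZ x).1 hx
      · intro hc
        exact ⟨e.symm c, (hZ _).2 (by simpa using hc), by simp⟩))
  have he2 : ∀ x, (e2 x : C) = e x := fun x => rfl
  have e3 : (LinearMap.ker S.g.hom ⧸ LinearMap.range S.moduleCatToCycles) ≃ₗ[R]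
      (Z ⧸ B.comap Z.subtype) := Submodule.Quotient.equiv _ _ e2 (by
    ext z
    constructor
    · rintro ⟨x, ⟨y, rfl⟩, rfl⟩
      change (e2 _ : C) ∈ B
      rw [he2, ← hB]
      exact ⟨y, rfl⟩
    · intro hz
      have hz' : (z : C) ∈ B := hz
      obtain ⟨x, rfl⟩ := e2.surjective z
      rw [he2, ← hB] at hz'
      obtain ⟨y, hy⟩ := hz'
      exact ⟨x, ⟨y, Subtype.ext hy⟩, rfl⟩)
  exact Module.Finite.equiv_iff (e1.trans e3)

variable {a : Ideal R} (K : Data R a)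

noncomputable def cpx : ChainComplex (ModuleCat.{u} R) ℕ :=
  ChainComplex.of (fun j => ModuleCat.of R (Fin (K.n j) → R))
    (fun j => ModuleCat.ofHom (K.A j).vecMulLinear)
    (fun j => by
      refine ModuleCat.hom_ext (LinearMap.ext fun v => ?_)
      change (v ᵥ* K.A (j+1)) ᵥ* K.A j = 0
      rw [Matrix.vecMul_vecMul, K.comp, Matrix.vecMul_zero])

theorem cpx_d (j : ℕ) : (cpx K).d (j+1) j = ModuleCat.ofHom (K.A j).vecMulLinear := by
  unfold cpx
  exact ChainComplex.of_d (fun j => ModuleCat.of R (Fin (K.n j) → R))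
    (fun j => ModuleCat.ofHom (K.A j).vecMulLinear) j

noncomputable def aug : ModuleCat.of R (Fin (K.n 0) → R) ⟶ ModuleCat.of R (R ⧸ a) :=
  ModuleCat.ofHom ((Submodule.mkQ a) ∘ₗ (∑ k, LinearMap.proj k))

theorem aug_apply (v : Fin (K.n 0) → R) : (aug K).hom v = Submodule.Quotient.mk (∑ k, v k) := by
  simp [aug]

theorem aug_zero (v : Fin (K.n 0) → R) : (aug K).hom v = 0 ↔ (∑ k, v k) ∈ a := by
  rw [aug_apply]; exact Submodule.Quotient.mk_eq_zero _

theorem d_aug : (cpx K).d 1 0 ≫ aug K = 0 := by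
  rw [cpx_d]
  refine ModuleCat.hom_ext (LinearMap.ext fun v => ?_)
  refine (aug_zero K _).2 ?_
  have hs : ∀ v : Fin (K.n 1) → R, ∑ k, (v ᵥ* K.A 0) k ∈ a := by
    intro v
    refine Submodule.sum_mem _ fun k _ => ?_
    rw [Matrix.vecMul_eq_sum, Finset.sum_apply]
    exact Submodule.sum_mem _ fun l _ => Ideal.mul_mem_left _ _ (K.mem _ _)
  exact hs v

noncomputable def augπ : cpx K ⟶ (ChainComplex.single₀ (ModuleCat.{u} R)).obj (ModuleCat.of R (R ⧸ a)) :=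
  (ChainComplex.toSingle₀Equiv _ _).symm ⟨aug K, d_aug K⟩

theorem augπ_f : (augπ K).f 0 = aug K := ChainComplex.toSingle₀Equiv_symm_apply_f_zero _ _

theorem augπ_quasiIso (h0 : ∀ v : Fin (K.n 0) → R, (∑ k, v k) ∈ a → ∃ w, w ᵥ* K.A 0 = v)
    (h1 : ∀ j v, v ᵥ* K.A j = 0 → ∃ w, w ᵥ* K.A (j+1) = v) : QuasiIso (augπ K) where
  quasiIsoAt m := by
    cases m with
    | zero =>
      rw [ChainComplex.quasiIsoAt₀_iff, ShortComplex.quasiIso_iff_of_zeros' _ rfl rfl rfl]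
      constructor
      · rw [ShortComplex.moduleCat_exact_iff]
        intro v hv
        have hv' : (aug K).hom v = 0 := by
          rw [← augπ_f]; exact hv
        obtain ⟨w, hw⟩ := h0 v ((aug_zero K v).1 hv')
        refine ⟨w, ?_⟩
        change ((cpx K).d 1 0).hom w = v
        rw [cpx_d]
        exact hw
      · rw [ModuleCat.epi_iff_surjective]
        intro q
        obtain ⟨x, hx⟩ := Submodule.Quotient.mk_surjective a q
        refine ⟨(Pi.single ⟨0, K.n0⟩ x : Fin (K.n 0) → R), ?_⟩
        change ((augπ K).f 0).hom _ = q
        rw [augπ_f]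
        refine (aug_apply K _).trans ?_
        rw [Finset.sum_pi_single']
        simpa using hx
    | succ m =>
      rw [quasiIsoAt_iff_exactAt' (hL := ChainComplex.exactAt_succ_single_obj ..),
          HomologicalComplex.exactAt_iff' _ (m + 2) (m + 1) m (by simp) (by simp),
          ShortComplex.moduleCat_exact_iff]
      intro v hv
      obtain ⟨w, hw⟩ := h1 m v (by
        have : ((cpx K).d (m+1) m).hom v = 0 := hv
        rw [cpx_d] at this
        exact this)
      refine ⟨w, ?_⟩
      change ((cpx K).d (m+2) (m+1)).hom w = v
      rw [cpx_d]
      exact hw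

noncomputable def resol (h0 : ∀ v : Fin (K.n 0) → R, (∑ k, v k) ∈ a → ∃ w, w ᵥ* K.A 0 = v)
    (h1 : ∀ j v, v ᵥ* K.A j = 0 → ∃ w, w ᵥ* K.A (j+1) = v) :
    ProjectiveResolution (ModuleCat.of R (R ⧸ a)) where
  complex := cpx K
  projective j := ModuleCat.projective_of_free (M := ModuleCat.of R (Fin (K.n j) → R)) (Pi.basisFun R (Fin (K.n j)))
  π := augπ K
  quasiIso := augπ_quasiIso K h0 h1

noncomputable def homE (Y : ModuleCat.{u} R) (j : ℕ) : ((cpx K).X j ⟶ Y) ≃ₗ[R] K.C j Y :=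
  (ModuleCat.homLinearEquiv (S := R) (M := ModuleCat.of R (Fin (K.n j) → R)) (N := Y)).trans
    ((Pi.basisFun R (Fin (K.n j))).constr R).symm

theorem homE_apply (Y : ModuleCat.{u} R) (j : ℕ) (f : (cpx K).X j ⟶ Y) (k : Fin (K.n j)) :
    homE K Y j f k = f.hom (Pi.single k 1 : Fin (K.n j) → R) := by
  have h := ((Pi.basisFun R (Fin (K.n j))).constr R).apply_symm_apply f.hom
  have h2 := LinearMap.congr_fun h (Pi.single k 1 : Fin (K.n j) → R)
  refine Eq.trans ?_ h2
  rw [← Pi.basisFun_apply, Module.Basis.constr_basis]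
  rfl

theorem homE_d (Y : ModuleCat.{u} R) (j : ℕ) (f : (cpx K).X j ⟶ Y) :
    homE K Y (j+1) ((cpx K).d (j+1) j ≫ f) = K.d j Y (homE K Y j f) := by
  ext k
  rw [homE_apply, cpx_d]
  change f.hom (Pi.single k 1 ᵥ* K.A j) = ∑ l, K.A j k l • homE K Y j f l
  have : (Pi.single k 1 ᵥ* K.A j) = ∑ l, K.A j k l • (Pi.single l 1 : Fin (K.n j) → R) := by
    rw [Matrix.single_one_vecMul]
    ext m
    simp [Pi.single_apply]
  rw [this]
  simp only [homE_apply]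
  refine (map_sum f.hom _ _).trans ?_
  exact Finset.sum_congr rfl fun l _ => map_smul f.hom _ _

theorem exZ (Y : ModuleCat.{u} R) (i : ℕ) (f : (cpx K).X i ⟶ Y) (j : ℕ) (hj : j = i + 1) :
    (cpx K).d j i ≫ f = 0 ↔ homE K Y i f ∈ K.Z i Y := by
  subst hj
  rw [Data.mem_Z, ← homE_d, LinearEquiv.map_eq_zero_iff]

theorem exB0 (Y : ModuleCat.{u} R) (f : (cpx K).X 0 ⟶ Y) (j : ℕ) (hj : j = 0) :
    (∃ y, (cpx K).d 0 j ≫ y = f) ↔ homE K Y 0 f ∈ K.B 0 Y := by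
  subst hj
  rw [HomologicalComplex.shape _ _ _ (by simp)]
  constructor
  · rintro ⟨y, rfl⟩
    rw [Limits.zero_comp, map_zero]
    exact Submodule.zero_mem _
  · intro h
    have : homE K Y 0 f = 0 := h
    rw [LinearEquiv.map_eq_zero_iff] at this
    exact ⟨0, by rw [this, Limits.comp_zero]⟩

theorem exB (Y : ModuleCat.{u} R) (i : ℕ) (f : (cpx K).X (i+1) ⟶ Y) (j : ℕ) (hj : j = i) :
    (∃ y, (cpx K).d (i+1) j ≫ y = f) ↔ homE K Y (i+1) f ∈ K.B (i+1) Y := by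
  subst hj
  constructor
  · rintro ⟨y, rfl⟩
    exact ⟨homE K Y j y, (homE_d K Y j y).symm⟩
  · rintro ⟨y, hy⟩
    obtain ⟨y, rfl⟩ := (homE K Y j).surjective y
    rw [← homE_d] at hy
    exact ⟨y, (homE K Y (j+1)).injective hy⟩

theorem ext_iff (h0 : ∀ v : Fin (K.n 0) → R, (∑ k, v k) ∈ a → ∃ w, w ᵥ* K.A 0 = v)
    (h1 : ∀ j v, v ᵥ* K.A j = 0 → ∃ w, w ᵥ* K.A (j+1) = v) (Y : ModuleCat.{u} R) (i : ℕ) :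
    Module.Finite R (((Ext R (ModuleCat.{u} R) i).obj (Opposite.op (ModuleCat.of R (R ⧸ a)))).obj Y) ↔
      Module.Finite R (K.E i Y) := by
  refine (Module.Finite.equiv_iff ((resol K h0 h1).isoExt i Y).toLinearEquiv).trans ?_
  let S := ((cpx K).linearYonedaObj R Y).sc i
  refine finite_homology_iff S (homE K Y i) (K.Z i Y) (K.B i Y) ?_ ?_
  · intro f
    exact exZ K Y i f _ (by simp)
  · intro f
    cases i with
    | zero => exact exB0 K Y f _ (by simp)
    | succ i => exact exB K Y i f _ (by simp)

end
end Cof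

namespace Cof
section
variable {R : Type u} [CommRing R] [IsNoetherianRing R] {M : Type u} [AddCommGroup M] [Module R M]

theorem cd_of_dim (n : ℕ) : ∀ (s : LTSeries (Module.support R M)),
    Order.krullDim (Module.support R M) ≤ ((s.length + n : ℕ) : WithBot ℕ∞) →
    cd ⊥ n (s.last : PrimeSpectrum R).asIdeal := by
  induction n with
  | zero =>
    intro s hs q hq hlt
    exfalso
    have hlt' : (s.last : PrimeSpectrum R) < ⟨q, hq⟩ := hlt
    have hmem : (⟨q, hq⟩ : PrimeSpectrum R) ∈ Module.support R M :=
      Module.mem_support_mono hlt'.le s.last.2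
    have := (Order.LTSeries.length_le_krullDim (s.snoc ⟨⟨q, hq⟩, hmem⟩ hlt')).trans hs
    rw [RelSeries.snoc_length] at this
    have h2 : s.length + 1 ≤ s.length + 0 := by exact_mod_cast this
    omega
  | succ n ih =>
    intro s hs q hq hlt _
    have hlt' : (s.last : PrimeSpectrum R) < ⟨q, hq⟩ := hlt
    have hmem : (⟨q, hq⟩ : PrimeSpectrum R) ∈ Module.support R M :=
      Module.mem_support_mono hlt'.le s.last.2
    have := ih (s.snoc ⟨⟨q, hq⟩, hmem⟩ hlt') (by
      rw [RelSeries.snoc_length, show s.length + 1 + n = s.length + (n + 1) by omega]; exact hs)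
    rw [RelSeries.last_snoc] at this
    exact this

theorem cd_of_krullDim {n : ℕ} (h : Order.krullDim (Module.support R M) ≤ (n : WithBot ℕ∞)) :
    ∀ p ∈ Module.support R M, cd ⊥ n p.asIdeal := by
  intro p hp
  have := cd_of_dim (M := M) n (RelSeries.singleton _ ⟨p, hp⟩) (by
    simpa using h)
  simpa using this

theorem isTors_of_supp {a : Ideal R} (h : Module.support R M ⊆ PrimeSpectrum.zeroLocus (a : Set R)) :
    IsTors a M := by
  intro x hx v
  have hrad : x ∈ (Submodule.annihilator (Submodule.span R {v})).radical := by
    rw [Ideal.radical_eq_sInf, Ideal.mem_sInf]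
    rintro J ⟨hJ, hJp⟩
    refine (show (⟨J, hJp⟩ : PrimeSpectrum R) ∈ PrimeSpectrum.zeroLocus (a : Set R) from h ?_) hx
    rw [Module.mem_support_iff_exists_annihilator]
    exact ⟨v, hJ⟩
  obtain ⟨N, hN⟩ := hrad
  exact ⟨N, Submodule.mem_annihilator.1 hN v (Submodule.mem_span_singleton_self v)⟩

theorem main {a : Ideal R} (K : Data R a) {n : ℕ} (hn : n ≤ 2) (N : Submodule R M) (hN : N.FG)
    (hdim : Order.krullDim (Module.support R (M ⧸ N)) ≤ (n : WithBot ℕ∞))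
    (hsupp : Module.support R M ⊆ PrimeSpectrum.zeroLocus (a : Set R))
    (h : ∀ i ≤ n, Module.Finite R (K.E i M)) (i : ℕ) : Module.Finite R (K.E i M) := by
  have hM : IsTors a (M ⧸ N) := (isTors_of_supp hsupp).quot N
  have hf := N.injective_subtype
  have hfg : Function.Exact N.subtype N.mkQ := LinearMap.exact_subtype_mkQ N
  have hg := N.mkQ_surjective
  have hNE : ∀ i, (fg R).P (K.E i N) := fun i => K.P_E (fg R) i (Module.Finite.iff_fg.2 hN)
  have hq : ∀ i ≤ n, Module.Finite R (K.E i (M ⧸ N)) := fun i hi =>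
    K.L2 (fg R) hf hfg hg (h i hi) (hNE (i+1))
  have hd := cd_of_krullDim hdim
  suffices hs : Module.Finite R (K.E i (M ⧸ N)) from K.L1 (fg R) hf hfg hg (hNE i) hs
  interval_cases n
  · exact Data.fgMod_bot.1 (K.fin0 ⊥ hM (fun p hp _ => hd p hp) (Data.fgMod_bot.2 (hq 0 le_rfl)) i)
  · exact Data.fgMod_bot.1 (K.fin1 ⊥ hM (fun p hp _ => hd p hp) (fun j hj => Data.fgMod_bot.2 (hq j hj)) i)
  · exact K.fin2 hM hd hq i
end
end Cof

theorem stmt8 {R : Type u} [CommRing R] [IsNoetherianRing R] (a : Ideal R)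
    (n : ℕ) (hn : n ≤ 2) (M : ModuleCat.{u} R)
    (hFD : ∃ N : Submodule R M, N.FG ∧
      Order.krullDim (Module.support R (M ⧸ N)) ≤ (n : WithBot (WithTop ℕ)))
    (hsupp : Module.support R M ⊆ PrimeSpectrum.zeroLocus (a : Set R)) :
    IsCofinite a M ↔ ∀ i ≤ n, Module.Finite R (extQuot a i M) := by
  obtain ⟨K, h0, h1⟩ := Cof.exists_data a
  obtain ⟨N, hN, hdim⟩ := hFD
  refine ⟨fun h i _ => h.2 i, fun h => ⟨hsupp, fun i => ?_⟩⟩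
  refine (Cof.ext_iff K h0 h1 M i).2 (Cof.main K hn N hN hdim hsupp (fun j hj => ?_) i)
  exact (Cof.ext_iff K h0 h1 M j).1 (h j hj)
end

section
/- Let R be a commutative noetherian ring with identity, a an ideal of R, and M a minimax R-module (M has a finitely generated submodule N such that M/N is artinian) with Supp_R M ⊆ V(a). Then M is a-cofinite if and only if Hom_R(R/a, M) is a finitely generated R-module. -/
universe u

open CategoryTheory

section
variable {R : Type u} [CommRing R] 

theorem bridge_surj {X Y : ModuleCat.{u} R} (P : ProjectiveResolution X) (n : ℕ) :
    ∃ φ : (P.complex.linearYonedaObj R Y).cycles n →ₗ[R] Abelian.Ext X Y n,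
      Function.Surjective φ ∧
      ∀ x, ∃ h, φ x = P.extMk ((P.complex.linearYonedaObj R Y).iCycles n x) (n+1) rfl h := by
  have hx : ∀ x, P.complex.d (n+1) n ≫ ((P.complex.linearYonedaObj R Y).iCycles n x : P.complex.X n ⟶ Y) = 0 := by
    intro x
    have := congr($((P.complex.linearYonedaObj R Y).iCycles_d n (n+1)) x)
    exact this
  refine ⟨⟨⟨fun x => P.extMk _ (n+1) rfl (hx x), ?_⟩, ?_⟩, ?_, fun x => ⟨hx x, rfl⟩⟩
  · intro x y
    refine Eq.trans ?_ (P.add_extMk _ _ (n+1) rfl (hx x) (hx y)).symm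
    congr 1
    exact map_add ((P.complex.linearYonedaObj R Y).iCycles n).hom x y
  · intro r x
    simp only [RingHom.id_apply]
    rw [Abelian.Ext.smul_eq_comp_mk₀]
    refine Eq.trans ?_ (P.extMk_comp_mk₀ _ (n+1) rfl (hx x) _).symm
    congr 1
    refine Eq.trans ?_ ((Linear.comp_smul _ _ _ _ r _).trans
      (congrArg (fun t => r • t) (Category.comp_id _))).symm
    exact map_smul ((P.complex.linearYonedaObj R Y).iCycles n).hom r x
  · intro α
    obtain ⟨f, hf, rfl⟩ := P.extMk_surjective α (n+1) rfl
    have hex := (ShortComplex.mk _ _ ((P.complex.linearYonedaObj R Y).iCycles_d n (n+1))).exact_of_f_is_kernel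
      ((P.complex.linearYonedaObj R Y).cyclesIsKernel n (n+1) (by simp))
    rw [ShortComplex.moduleCat_exact_iff] at hex
    obtain ⟨x, hx⟩ := hex f hf
    refine ⟨x, ?_⟩
    simp only [LinearMap.coe_mk, AddHom.coe_mk]
    congr 1

theorem bridge_zero {X Y : ModuleCat.{u} R}
    (h : Module.Finite R (((Ext R (ModuleCat.{u} R) 0).obj (Opposite.op X)).obj Y)) :
    Module.Finite R (Abelian.Ext X Y 0) := by
  let P := ProjectiveResolution.of X
  obtain ⟨φ, hs, hφ⟩ := bridge_surj (Y := Y) P 0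
  have h2 : Module.Finite R ((P.complex.linearYonedaObj R Y).homology 0) :=
    Module.Finite.equiv (P.isoExt 0 Y).toLinearEquiv
  have hiso : IsIso ((P.complex.linearYonedaObj R Y).homologyπ 0) :=
    (P.complex.linearYonedaObj R Y).isIso_homologyπ 0 0 (by simp) 
     ((P.complex.linearYonedaObj R Y).shape _ _ (by simp))
  have h3 : Module.Finite R ((P.complex.linearYonedaObj R Y).cycles 0) :=
    Module.Finite.equiv (asIso ((P.complex.linearYonedaObj R Y).homologyπ 0)).symm.toLinearEquiv
  exact Module.Finite.of_surjective φ hs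

theorem bridge_succ {X Y : ModuleCat.{u} R} (n : ℕ)
    (h : Module.Finite R (Abelian.Ext X Y (n+1))) :
    Module.Finite R (((Ext R (ModuleCat.{u} R) (n+1)).obj (Opposite.op X)).obj Y) := by
  let P := ProjectiveResolution.of X
  obtain ⟨φ, hs, hφ⟩ := bridge_surj (Y := Y) P (n+1)
  suffices h2 : Module.Finite R ((P.complex.linearYonedaObj R Y).homology (n+1)) from
    Module.Finite.equiv (P.isoExt (n+1) Y).symm.toLinearEquiv
  have hπ : Function.Surjective ((P.complex.linearYonedaObj R Y).homologyπ (n+1)).hom :=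
    (ModuleCat.epi_iff_surjective _).1 inferInstance
  have hk : LinearMap.ker φ ≤ LinearMap.ker ((P.complex.linearYonedaObj R Y).homologyπ (n+1)).hom := by
    intro x hx
    obtain ⟨h1, h2⟩ := hφ x
    rw [LinearMap.mem_ker] at hx ⊢
    rw [hx] at h2
    obtain ⟨g, hg⟩ := (P.extMk_eq_zero_iff _ _ _ _ n rfl).1 h2.symm
    have hxg : x = (P.complex.linearYonedaObj R Y).toCycles n (n+1) g := by
      apply (ModuleCat.mono_iff_injective ((P.complex.linearYonedaObj R Y).iCycles (n+1))).1 inferInstance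
      refine hg.symm.trans ?_
      exact congr($((P.complex.linearYonedaObj R Y).toCycles_i n (n+1)) g).symm
    rw [hxg]
    exact congr($((P.complex.linearYonedaObj R Y).toCycles_comp_homologyπ n (n+1)) g)
  have := Module.Finite.equiv (φ.quotKerEquivOfSurjective hs).symm
  refine Module.Finite.of_surjective ((LinearMap.ker φ).liftQ _ hk) ?_
  rw [← LinearMap.range_eq_top, Submodule.range_liftQ, LinearMap.range_eq_top]
  exact hπ
end

section
variable {R : Type u} [CommRing R] [IsNoetherianRing R]

theorem ext_mid {X : ModuleCat.{u} R} {S : ShortComplex (ModuleCat.{u} R)} (hS : S.ShortExact)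
    (i : ℕ) (h1 : Module.Finite R (Abelian.Ext X S.X₁ i))
    (h3 : Module.Finite R (Abelian.Ext X S.X₃ i)) : Module.Finite R (Abelian.Ext X S.X₂ i) := by
  have : IsNoetherian R (Abelian.Ext X S.X₁ i) := isNoetherian_of_isNoetherianRing_of_finite R _
  have : IsNoetherian R (Abelian.Ext X S.X₃ i) := isNoetherian_of_isNoetherianRing_of_finite R _
  have : IsNoetherian R (Abelian.Ext X S.X₂ i) := by
    refine isNoetherian_of_range_eq_ker
      ((Abelian.Ext.mk₀ S.f).postcompOfLinear R X (add_zero i))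
      ((Abelian.Ext.mk₀ S.g).postcompOfLinear R X (add_zero i)) ?_
    apply le_antisymm
    · rintro _ ⟨x, rfl⟩
      simp
    · intro x hx
      obtain ⟨y, hy⟩ := Abelian.Ext.covariant_sequence_exact₂ X hS x hx
      exact ⟨y, hy⟩
  infer_instance

theorem ext_right {X : ModuleCat.{u} R} {S : ShortComplex (ModuleCat.{u} R)} (hS : S.ShortExact)
    (i : ℕ) (h2 : Module.Finite R (Abelian.Ext X S.X₂ i))
    (h1 : Module.Finite R (Abelian.Ext X S.X₁ (i+1))) :
    Module.Finite R (Abelian.Ext X S.X₃ i) := by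
  have : IsNoetherian R (Abelian.Ext X S.X₁ (i+1)) := isNoetherian_of_isNoetherianRing_of_finite R _
  have : IsNoetherian R (Abelian.Ext X S.X₂ i) := isNoetherian_of_isNoetherianRing_of_finite R _
  have : IsNoetherian R (Abelian.Ext X S.X₃ i) := by
    refine isNoetherian_of_range_eq_ker
      ((Abelian.Ext.mk₀ S.g).postcompOfLinear R X (add_zero i))
      (hS.extClass.postcompOfLinear R X rfl) ?_
    apply le_antisymm
    · rintro _ ⟨x, rfl⟩
      simp
    · intro x hx
      obtain ⟨y, hy⟩ := Abelian.Ext.covariant_sequence_exact₃ X hS x rfl hx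
      exact ⟨y, hy⟩
  infer_instance

theorem ext_killed (a : Ideal R) (Y : ModuleCat.{u} R) (i : ℕ)
    (α : Abelian.Ext (ModuleCat.of R (R ⧸ a)) Y i) (y : R) (hy : y ∈ a) : y • α = 0 := by
  have h0 : y • 𝟙 (ModuleCat.of R (R ⧸ a)) = 0 := by
    ext
    simp
    change y • (1 : R ⧸ a) = 0
    rw [← map_one (Ideal.Quotient.mk a)]
    change Ideal.Quotient.mk a (y * 1) = 0
    rw [mul_one, Ideal.Quotient.eq_zero_iff_mem]
    exact hy
  have h1 : α = (Abelian.Ext.mk₀ (𝟙 (ModuleCat.of R (R ⧸ a)))).comp α (zero_add i) := by simp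
  rw [h1, ← Abelian.Ext.smul_comp, ← Abelian.Ext.mk₀_smul, h0]
  simp

/-- All `Ext^i(R/a, A)` are finitely generated. -/
def GoodExt (a : Ideal R) (A : Type u) [AddCommGroup A] [Module R A] : Prop :=
  ∀ i, Module.Finite R (Abelian.Ext (ModuleCat.of R (R ⧸ a)) (ModuleCat.of R A) i)

variable {a : Ideal R} {A B : Type u} [AddCommGroup A] [Module R A] [AddCommGroup B] [Module R B]

theorem good_fin [Module.Finite R A] : GoodExt a A := fun _ => inferInstance

theorem good_mid (f : A →ₗ[R] B) (hf : Function.Surjective f)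
    (h1 : GoodExt a (LinearMap.ker f)) (h3 : GoodExt a B) : GoodExt a A := fun i =>
  ext_mid (LinearMap.shortExact_shortComplexKer hf) i (h1 i) (h3 i)

theorem good_right (f : A →ₗ[R] B) (hf : Function.Surjective f)
    (h1 : GoodExt a (LinearMap.ker f)) (h3 : GoodExt a A) : GoodExt a B := fun i =>
  ext_right (LinearMap.shortExact_shortComplexKer hf) i (h3 i) (h1 (i+1))

theorem good_div (y : R) (hy : y ∈ a) (hf : Function.Surjective (LinearMap.lsmul R A y))
    (h1 : GoodExt a (LinearMap.ker (LinearMap.lsmul R A y))) : GoodExt a A := by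
  intro i
  have := h1 i
  refine Module.Finite.of_surjective ((Abelian.Ext.mk₀ (LinearMap.shortComplexKer (LinearMap.lsmul R A y)).f).postcompOfLinear R (ModuleCat.of R (R ⧸ a)) (add_zero i)) ?_
  intro x
  refine Abelian.Ext.covariant_sequence_exact₂ _ (LinearMap.shortExact_shortComplexKer hf) x ?_
  have e : (LinearMap.shortComplexKer (LinearMap.lsmul R A y)).g = y • 𝟙 (ModuleCat.of R A) := by
    ext
    simp
  rw [e]
  erw [← Abelian.Ext.smul_eq_comp_mk₀]
  exact ext_killed a _ i x y hy

theorem tors_inj (f : A →ₗ[R] B) (hf : Function.Injective f)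
    [IsNoetherian R (Submodule.torsionBySet R B (a : Set R))] :
    IsNoetherian R (Submodule.torsionBySet R A (a : Set R)) := by
  refine isNoetherian_of_injective (f.restrict (p := Submodule.torsionBySet R A (a : Set R))
    (q := Submodule.torsionBySet R B (a : Set R)) ?_) ?_
  · intro x hx
    rw [Submodule.mem_torsionBySet_iff] at hx ⊢
    intro r
    rw [← map_smul, hx r, map_zero]
  · intro x y h
    apply Subtype.ext
    apply hf
    exact congr($(h).1)

theorem noeth_of_pow (n : ℕ) : ∀ (A : Type u) [AddCommGroup A] [Module R A]
    (_ : ∀ r ∈ a ^ n, ∀ x : A, r • x = 0)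
    [IsNoetherian R (Submodule.torsionBySet R A (a : Set R))], ∀ N : Submodule R A, N.FG := by
  induction n with
  | zero =>
    intro A _ _ h _
    have : Subsingleton A := ⟨fun x y => by
      rw [← one_smul R x, ← one_smul R y, h 1 (by simp), h 1 (by simp)]⟩
    rw [← isNoetherian_def]
    infer_instance
  | succ n ih =>
    intro A _ _ h _
    rw [← isNoetherian_def]
    obtain ⟨s, hs⟩ := (isNoetherianRing_iff_ideal_fg R).1 inferInstance a
    let T := Submodule.torsionBySet R A ((a ^ n : Ideal R) : Set R)
    have hT : IsNoetherian R T := by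
      have := tors_inj (a := a) T.subtype T.injective_subtype
      rw [isNoetherian_def]
      apply ih
      rintro r hr ⟨x, hx⟩
      rw [Submodule.mem_torsionBySet_iff] at hx
      exact Subtype.ext (hx ⟨r, hr⟩)
    have hsa : ∀ g ∈ s, g ∈ a := fun g hg => hs ▸ Submodule.subset_span hg
    let φ : A →ₗ[R] (s → T) := LinearMap.pi fun g => (LinearMap.lsmul R A (g : R)).codRestrict T (by
      intro x
      rw [Submodule.mem_torsionBySet_iff]
      rintro ⟨r, hr⟩
      simp only [LinearMap.lsmul_apply, smul_smul]
      apply h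
      rw [pow_succ]
      exact Ideal.mul_mem_mul hr (hsa _ g.2))
    refine isNoetherian_of_range_eq_ker (Submodule.torsionBySet R A (a : Set R)).subtype φ ?_
    rw [Submodule.range_subtype]
    ext x
    have : Submodule.torsionBySet R A (a : Set R) = Submodule.torsionBySet R A (s : Set R) := by
      rw [← hs]
      exact (Submodule.torsionBySet_eq_torsionBySet_span _).symm
    rw [this, Submodule.mem_torsionBySet_iff, LinearMap.mem_ker]
    constructor
    · intro hx
      funext g
      exact Subtype.ext (hx ⟨g, g.2⟩)
    · rintro hx ⟨g, hg⟩
      exact congr(($hx ⟨g, hg⟩).1)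

theorem good_art (s : Finset R) : ∀ (J : Ideal R) (A : Type u) [AddCommGroup A] [Module R A]
    [IsArtinian R A] [IsNoetherian R (Submodule.torsionBySet R A (a : Set R))] (n : ℕ)
    (_ : a = J ⊔ Ideal.span s) (_ : ∀ r ∈ J ^ n, ∀ x : A, r • x = 0), GoodExt a A := by
  classical
  induction s using Finset.induction_on with
  | empty =>
    intro J A _ _ _ _ n ha hJ
    simp only [Finset.coe_empty, Ideal.span_empty, bot_le, sup_of_le_left] at ha
    subst ha
    have : IsNoetherian R A := isNoetherian_def.2 (noeth_of_pow n A hJ)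
    exact good_fin
  | insert y s hys ih =>
    intro J A _ _ _ _ n ha hJ
    have ha' : a = (J ⊔ Ideal.span {y}) ⊔ Ideal.span s := by
      rw [ha, sup_assoc, ← Ideal.span_union, Finset.coe_insert, Set.insert_eq]
    have hy : y ∈ a := by
      rw [ha]
      exact Submodule.mem_sup_right (Ideal.subset_span (by simp))
    -- the induction hypothesis for modules embedding in `A` and killed by a power of `y`
    have key : ∀ (K : Type u) [AddCommGroup K] [Module R K] (ι : K →ₗ[R] A)
        (_ : Function.Injective ι) (m : ℕ) (_ : ∀ x, y ^ m • x = (0 : K)), GoodExt a K := by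
      intro K _ _ ι hι m hm
      have := isArtinian_of_injective ι hι
      have := tors_inj (a := a) ι hι
      refine ih (J ⊔ Ideal.span {y}) K (n + m) ha' ?_
      intro r hr x
      have := Ideal.sup_pow_add_le_pow_sup_pow hr
      rw [Ideal.span_singleton_pow, Submodule.mem_sup] at this
      obtain ⟨p, hp, q, hq, rfl⟩ := this
      obtain ⟨t, rfl⟩ := Ideal.mem_span_singleton'.1 hq
      rw [add_smul, mul_smul, hm, smul_zero, add_zero]
      apply hι
      rw [map_smul, map_zero, hJ p hp]
    let f : Module.End R A := LinearMap.lsmul R A y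
    have hfp : ∀ m x, (f ^ m) x = y ^ m • x := by
      intro m
      induction m with
      | zero => simp
      | succ m ih => 
        intro x
        rw [pow_succ, Module.End.mul_apply, ih, pow_succ, mul_smul]
        rfl
    obtain ⟨k, hk⟩ := Filter.eventually_atTop.mp
      (f.eventually_codisjoint_ker_pow_range_pow.and f.eventually_iInf_range_pow_eq)
    obtain ⟨h1, h2⟩ := hk k le_rfl
    have h3 : LinearMap.range (f ^ k) = LinearMap.range (f ^ (k+1)) := by
      rw [← h2, ← (hk (k+1) (by omega)).2]
    -- the divisible part
    have hB : GoodExt a (LinearMap.range (f ^ k)) := by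
      refine good_div y hy ?_ ?_
      · rintro ⟨x, hx⟩
        have hx' := hx
        rw [h3] at hx'
        obtain ⟨z, hz⟩ := hx'
        refine ⟨⟨(f ^ k) z, z, rfl⟩, Subtype.ext ?_⟩
        change y • (f ^ k) z = x
        rw [← hz]
        rw [pow_succ', Module.End.mul_apply]
        rfl
      · refine key _ ((Submodule.subtype _).comp (Submodule.subtype _))
          (Subtype.val_injective.comp Subtype.val_injective) 1 ?_
        rintro ⟨x, hx⟩
        rw [pow_one]
        exact Subtype.ext hx
    have hCk : ∀ x : LinearMap.ker (f ^ k), y ^ k • x = 0 := by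
      rintro ⟨x, hx⟩
      apply Subtype.ext
      rw [LinearMap.mem_ker, hfp] at hx
      exact hx
    have hC : GoodExt a (LinearMap.ker (f ^ k)) :=
      key _ (Submodule.subtype _) Subtype.val_injective k hCk
    have hQ : GoodExt a (A ⧸ LinearMap.range (f ^ k)) := by
      refine good_right ((LinearMap.range (f ^ k)).mkQ.comp (LinearMap.ker (f ^ k)).subtype)
        ?_ ?_ hC
      · rw [← LinearMap.range_eq_top, LinearMap.range_comp, Submodule.range_subtype,
          Submodule.map_mkQ_eq_top, sup_comm]
        exact h1.eq_top
      · refine key _ ((Submodule.subtype _).comp (Submodule.subtype _))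
          (Subtype.val_injective.comp Subtype.val_injective) k ?_
        rintro ⟨x, hx⟩
        exact Subtype.ext (hCk x)
    refine good_mid (LinearMap.range (f ^ k)).mkQ (Submodule.mkQ_surjective _) ?_ hQ
    rw [Submodule.ker_mkQ]
    exact hB

theorem good_minimax (N : Submodule R A) (hN : N.FG) [IsArtinian R (A ⧸ N)]
    (h0 : Module.Finite R (Abelian.Ext (ModuleCat.of R (R ⧸ a)) (ModuleCat.of R A) 0)) :
    GoodExt a A := by
  have hNf : Module.Finite R N := Module.Finite.iff_fg.2 hN
  have hNG : GoodExt a (LinearMap.ker N.mkQ) := by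
    rw [Submodule.ker_mkQ]; exact good_fin
  have hQ0 := ext_right (LinearMap.shortExact_shortComplexKer N.mkQ_surjective) 0 h0 (hNG 1)
  have hQ1 : Module.Finite R ((R ⧸ a) →ₗ[R] (A ⧸ N)) :=
    Module.Finite.equiv (Abelian.Ext.linearEquiv₀.trans
      (ModuleCat.homLinearEquiv (S := R) (M := ModuleCat.of R (R ⧸ a))
        (N := ModuleCat.of R (A ⧸ N))))
  have hQ2 := isNoetherian_of_isNoetherianRing_of_finite R ((R ⧸ a) →ₗ[R] (A ⧸ N))
  have hT : IsNoetherian R (Submodule.torsionBySet R (A ⧸ N) (a : Set R)) := by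
    have hs : Function.Surjective a.mkQ := a.mkQ_surjective
    have hle : ∀ x : Submodule.torsionBySet R (A ⧸ N) (a : Set R),
        a ≤ LinearMap.ker (LinearMap.toSpanSingleton R (A ⧸ N) x.1) := by
      rintro ⟨x, hx⟩ r hr
      rw [Submodule.mem_torsionBySet_iff] at hx
      exact hx ⟨r, hr⟩
    refine isNoetherian_of_injective (P := (R ⧸ a) →ₗ[R] (A ⧸ N))
      (⟨⟨fun x => a.liftQ (LinearMap.toSpanSingleton R (A ⧸ N) x.1) (hle x), ?_⟩, ?_⟩ :
        Submodule.torsionBySet R (A ⧸ N) (a : Set R) →ₗ[R] ((R ⧸ a) →ₗ[R] (A ⧸ N))) ?_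
    · intro x y
      refine LinearMap.ext fun q => ?_
      obtain ⟨q, rfl⟩ := hs q
      exact smul_add q x.1 y.1
    · intro r x
      refine LinearMap.ext fun q => ?_
      obtain ⟨q, rfl⟩ := hs q
      exact smul_comm q r x.1
    · intro x y h
      have h1 : (1 : R) • x.1 = (1 : R) • y.1 := congr($h (a.mkQ 1))
      apply Subtype.ext
      rwa [one_smul, one_smul] at h1
  obtain ⟨s, hs⟩ := (isNoetherianRing_iff_ideal_fg R).1 inferInstance a
  refine good_mid N.mkQ N.mkQ_surjective hNG (good_art s ⊥ _ 1 ?_ ?_)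
  · rw [bot_sup_eq]; exact hs.symm
  · intro r hr x
    simp at hr
    rw [hr, zero_smul]
end

theorem stmt9 {R : Type u} [CommRing R] [IsNoetherianRing R] (a : Ideal R)
    (M : ModuleCat.{u} R)
    (hmm : ∃ N : Submodule R M, N.FG ∧ IsArtinian R (M ⧸ N))
    (hsupp : Module.support R M ⊆ PrimeSpectrum.zeroLocus (a : Set R)) :
    IsCofinite a M ↔ Module.Finite R (extQuot a 0 M) := by
  refine ⟨fun h => h.2 0, fun h => ⟨hsupp, fun i => ?_⟩⟩
  obtain ⟨N, hN, hA⟩ := hmm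
  have hg : GoodExt a M := good_minimax N hN (bridge_zero h)
  cases i with
  | zero => exact h
  | succ i => exact bridge_succ i (hg (i+1))
end
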